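/- Let d ≥ 3 be an integer and let a > 0, γ > 0. Let V₁, V₂ : ℝ^d → ℝ with V₁ continuously differentiable, satisfying |V₁(x)| ≤ a(1+|x|)^{−γ}, |V₂(x)| ≤ a(1+|x|)^{−γ−1} and ∂_rV₁(x) ≤ a(1+|x|)^{−γ−1} for all x. Then there exists a function B : (0,∞) → (0,∞) (depending on a, γ, d) with τ₀·B(τ₀) → 0 as τ₀ → 0, and an absolute constant C (independent of ε, τ and τ₀), such that: for every τ₀ > 0, every ε ≠ 0, every τ ≥ B(τ₀), and every classical solution u of −Δu + (V₁+V₂)u ± iεu − τu = f with u, ∇u ∈ L²(ℝ^d) and f ∈ L²(ℝ^d), one has ‖∇u‖²_{X_{τ₀}} + τ‖u‖²_{X_{τ₀}} + (d−3)∫_{|x|>τ₀} |u(x)|²/|x|³ dx + sup_{R≥τ₀} R^{−2}∫_{|x|=R} |u(x)|² dσ_R(x) ≤ C‖f‖²_{X*_{τ₀}}. -/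

import Mathlib

/-!
The proof is a Morawetz multiplier argument at every scale `R ≥ τ₀`. Put `h = f - V₂ u` and
`Z = V₁ - τ`, so that `-Δu + Zu ± iεu = h`, and use the multiplier `β (x·∇u + κu)` with
`β = (R² + |x|²)^{-1/2}` and `κ = (d-1)/2` (`div_morY`, `morawetz`). As `|V₁| ≤ a ≤ τ/2`, the
resulting quadratic form is positive. Taking the supremum over `R` it controls `‖∇u‖²_X`,
`τ‖u‖²_X`, the cubic norm `S = sup R⁻³ ∫_{B_R} |u|²`, and `(d-3) ∫_{|x|>τ₀} |u|²/|x|³`.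

The right-hand side has three kinds of terms.

* The contribution of `f` is bounded by the duality between `X` and `X*` (`pairing`).
* The contributions of `V₂` and `∂_r V₁` are bounded by dyadic summation (`weight_pairing`,
  `H_bound`), with constant `c(τ₀) = a (τ₀ + Σ_j 2^{j+1} (1+2^j)^{-γ-1})`. After weighting `u`
  against `∇u` by `√τ` they carry the small factor `c/√τ`.
* The contribution of `ε` is at most `|ε| ∫ |u||∇u|`. The energy identities (`energy_im`,
  `energy_re`) bound it by `√(τ+a+|ε|) ∫ |h||u|`. To absorb the part growing with `ε` one also needs
  `|ε| ‖u‖²_X ≤ S + √|ε| ∫ |h||u|`, where radii with `R²|ε| ≤ 1` give the cubic norm and larger radii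
  the energy identity.

Everything is absorbed on the left as soon as `√τ ≥ 2 M c(τ₀)` for a constant `M` depending only on
`d` (`final_algebra`, `core`). Hence `B(τ₀) = 1 + 2a + (2 M c(τ₀))²`, a polynomial in `τ₀`, so that
`τ₀ B(τ₀) → 0`. The finiteness of all norms, needed for absorption, follows from `u, ∇u ∈ L²`.

The spherical term follows from the other norms by a trace inequality (`sphere_trace`). It needs the
Hausdorff measure of the unit sphere to be a multiple of the measure of polar coordinates: the
Hausdorff measure is finite (`sphere_hausdorff_finite`), and two rotation invariant finite measures
are proportional (`proportional`).
-/

noncomputable section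
open MeasureTheory Metric Set ENNReal

abbrev Ed (d : ℕ) := EuclideanSpace ℝ (Fin d)

/-- partial derivative of a complex valued function -/
def pd {d : ℕ} (u : Ed d → ℂ) (i : Fin d) (x : Ed d) : ℂ :=
  fderiv ℝ u x (EuclideanSpace.single i 1)

/-- Laplacian of a complex valued function -/
def lap {d : ℕ} (u : Ed d → ℂ) (x : Ed d) : ℂ :=
  ∑ i, fderiv ℝ (pd u i) x (EuclideanSpace.single i 1)

/-- squared norm of the gradient, as an extended nonnegative real -/
def gradSq {d : ℕ} (u : Ed d → ℂ) (x : Ed d) : ℝ≥0∞ :=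
  ∑ i, (‖pd u i x‖₊ : ℝ≥0∞) ^ 2

/-- |u(x)|² as an extended nonnegative real -/
def usq {d : ℕ} (u : Ed d → ℂ) (x : Ed d) : ℝ≥0∞ := (‖u x‖₊ : ℝ≥0∞) ^ 2

/-- radial derivative ∂_r V (x) = (x/|x|)·∇V(x) -/
def radialDeriv {d : ℕ} (V : Ed d → ℝ) (x : Ed d) : ℝ :=
  fderiv ℝ V x x / ‖x‖

/-- Morrey–Campanato type quantity sup_{R>0} (1/R) ∫_{B(0,R)} g -/
def nX2 {d : ℕ} (g : Ed d → ℝ≥0∞) : ℝ≥0∞ :=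
  ⨆ (R : ℝ) (_ : 0 < R), (ENNReal.ofReal R)⁻¹ * ∫⁻ x in ball (0 : Ed d) R, g x

/-- dyadic shell C_j -/
def shell (d : ℕ) (j : ℤ) : Set (Ed d) := {x | (2:ℝ)^j < ‖x‖ ∧ ‖x‖ ≤ (2:ℝ)^(j+1)}

/-- the dual norm ‖f‖_{X*} applied to g = |f|² -/
def nXstar {d : ℕ} (g : Ed d → ℝ≥0∞) : ℝ≥0∞ :=
  ∑' j : ℤ, (ENNReal.ofReal ((2:ℝ)^(j+1)) * ∫⁻ x in shell d j, g x) ^ (1/2 : ℝ)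

/-- the index j₀ with 2^{j₀} < ρ ≤ 2^{j₀+1} -/
def jIdx (ρ : ℝ) : ℤ := ⌈Real.logb 2 ρ⌉ - 1

/-- sup_{R ≥ ρ} (1/R)∫_{B(0,R)} g -/
def nX2r {d : ℕ} (ρ : ℝ) (g : Ed d → ℝ≥0∞) : ℝ≥0∞ :=
  ⨆ (R : ℝ) (_ : ρ ≤ R), (ENNReal.ofReal R)⁻¹ * ∫⁻ x in ball (0 : Ed d) R, g x

/-- the dual norm ‖f‖_{X*_ρ} applied to g = |f|² -/
def nXstarr {d : ℕ} (ρ : ℝ) (g : Ed d → ℝ≥0∞) : ℝ≥0∞ :=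
  (∑' j : {j : ℤ // jIdx ρ ≤ j},
    (ENNReal.ofReal ((2:ℝ)^((j:ℤ)+1)) * ∫⁻ x in shell d (j:ℤ), g x) ^ (1/2 : ℝ))
  + (ENNReal.ofReal ρ * ∫⁻ x in ball (0 : Ed d) ρ, g x) ^ (1/2 : ℝ)

/-- integral of g over the sphere of radius R w.r.t. (d-1)-dimensional Hausdorff measure -/
def sphInt {d : ℕ} (R : ℝ) (g : Ed d → ℝ≥0∞) : ℝ≥0∞ :=
  ∫⁻ x in Metric.sphere (0 : Ed d) R, g x ∂(μH[(d:ℝ) - 1])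

/-! ### The divergence theorem on the whole space -/

/-- partial derivative of a real valued function -/
def dR {d : ℕ} (w : Ed d → ℝ) (i : Fin d) (x : Ed d) : ℝ :=
  fderiv ℝ w x (EuclideanSpace.single i 1)

lemma dR_continuous {d : ℕ} {w : Ed d → ℝ} (hw : ContDiff ℝ 1 w) (i : Fin d) :
    Continuous (dR w i) := by
  have := hw.continuous_fderiv (by norm_num)
  unfold dR
  fun_prop

/-- The divergence theorem on the whole space, in inequality form: an integrable `C¹` field `Y` with
`div Y ≤ J`, `J` integrable, forces `0 ≤ ∫ J`. The field is tested against the cutoffs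
`χ_n(x) = φ(x/(n+1))`, whose gradients are `O(1/n)`. -/
theorem integral_nonneg_of_div_le {d : ℕ} {Y : Fin d → Ed d → ℝ} {J : Ed d → ℝ}
    (hY : ∀ i, ContDiff ℝ 1 (Y i)) (hYi : ∀ i, Integrable (Y i)) (hJ : Integrable J)
    (hdiv : ∀ x, ∑ i, dR (Y i) i x ≤ J x) : 0 ≤ ∫ x, J x := by
  let φ : ContDiffBump (0 : Ed d) := ⟨1, 2, one_pos, one_lt_two⟩
  have hφ : ContDiff ℝ 1 (φ : Ed d → ℝ) := φ.contDiff
  let c : ℕ → ℝ := fun n => ((n : ℝ) + 1)⁻¹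
  have hc : ∀ n, 0 < c n := fun n => by positivity
  have hc0 : Filter.Tendsto c Filter.atTop (nhds 0) := by
    simpa [c] using tendsto_one_div_add_atTop_nhds_zero_nat (𝕜 := ℝ)
  let χ : ℕ → Ed d → ℝ := fun n x => φ (c n • x)
  have hχ : ∀ n, ContDiff ℝ 1 (χ n) := fun n => hφ.comp (contDiff_const_smul (c n))
  have hχs : ∀ n, HasCompactSupport (χ n) := fun n =>
    φ.hasCompactSupport.comp_homeomorph (Homeomorph.smulOfNeZero (c n) (hc n).ne')
  have hdχ : ∀ n i x, dR (χ n) i x = c n * dR φ i (c n • x) := by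
    intro n i x
    have h1 : HasFDerivAt (χ n) ((fderiv ℝ φ (c n • x)).comp (c n • ContinuousLinearMap.id ℝ (Ed d))) x :=
      (hφ.differentiable (by norm_num) _).hasFDerivAt.comp x
        ((hasFDerivAt_id x).const_smul (c n))
    simp [dR, h1.fderiv]
  obtain ⟨M, hM⟩ : ∃ M : ℝ, ∀ i x, |dR φ i x| ≤ M := by
    have h1 : HasCompactSupport (fderiv ℝ φ) := φ.hasCompactSupport.fderiv (𝕜 := ℝ)
    obtain ⟨M, hM⟩ := h1.exists_bound_of_continuous (hφ.continuous_fderiv (by norm_num))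
    refine ⟨M, fun i x => ?_⟩
    have := (fderiv ℝ φ x).le_opNorm (EuclideanSpace.single i 1)
    simp at this
    exact this.trans (hM x)
  have hparts : ∀ n i, ∫ x, χ n x * dR (Y i) i x = - ∫ x, dR (χ n) i x * Y i x := by
    intro n i
    apply integral_mul_fderiv_eq_neg_fderiv_mul_of_integrable
    · refine Continuous.integrable_of_hasCompactSupport ((dR_continuous (hχ n) i).mul (hY i).continuous) ?_
      exact HasCompactSupport.mul_right ((hχs n).fderiv_apply (𝕜 := ℝ) _)
    · refine Continuous.integrable_of_hasCompactSupport ((hχ n).continuous.mul (dR_continuous (hY i) i)) ?_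
      exact (hχs n).mul_right
    · refine Continuous.integrable_of_hasCompactSupport ((hχ n).continuous.mul (hY i).continuous) ?_
      exact (hχs n).mul_right
    · exact fun x _ => (hχ n).differentiable (by norm_num) x
    · exact fun x _ => (hY i).differentiable (by norm_num) x
  have hlim1 : ∀ i, Filter.Tendsto (fun n => ∫ x, χ n x * dR (Y i) i x) Filter.atTop (nhds 0) := by
    intro i
    simp_rw [hparts]
    rw [← neg_zero]
    refine Filter.Tendsto.neg ?_
    have hb : ∀ n, ‖∫ x, dR (χ n) i x * Y i x‖ ≤ c n * (M * ∫ x, ‖Y i x‖) := by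
      intro n
      rw [← integral_const_mul, ← integral_const_mul]
      refine norm_integral_le_of_norm_le (((hYi i).norm.const_mul _).const_mul _) ?_
      refine Filter.Eventually.of_forall fun x => ?_
      rw [hdχ, norm_mul, norm_mul, Real.norm_of_nonneg (hc n).le, mul_assoc]
      gcongr
      exact hM _ _
    refine squeeze_zero_norm hb ?_
    simpa using hc0.mul_const (M * ∫ x, ‖Y i x‖)
  have hlim2 : Filter.Tendsto (fun n => ∫ x, χ n x * J x) Filter.atTop (nhds (∫ x, J x)) := by
    refine tendsto_integral_of_dominated_convergence (fun x => ‖J x‖) ?_ hJ.norm ?_ ?_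
    · exact fun n => (hχ n).continuous.aestronglyMeasurable.mul hJ.1
    · intro n
      refine Filter.Eventually.of_forall fun x => ?_
      rw [norm_mul, Real.norm_of_nonneg φ.nonneg]
      exact mul_le_of_le_one_left (norm_nonneg _) φ.le_one
    · refine Filter.Eventually.of_forall fun x => ?_
      have : Filter.Tendsto (fun n => χ n x) Filter.atTop (nhds 1) := by
        have h1 : Filter.Tendsto (fun n => c n • x) Filter.atTop (nhds 0) := by
          simpa using hc0.smul_const x
        have h2 := (hφ.continuous.tendsto 0).comp h1
        rwa [φ.one_of_mem_closedBall (by simp [φ])] at h2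
      simpa using this.mul_const (J x)
  have hlim3 : Filter.Tendsto (fun n => ∑ i, ∫ x, χ n x * dR (Y i) i x) Filter.atTop (nhds 0) := by
    simpa using tendsto_finsetSum Finset.univ (fun i _ => hlim1 i)
  refine le_of_tendsto_of_tendsto' hlim3 hlim2 fun n => ?_
  rw [← integral_finsetSum]
  · refine integral_mono ?_ ?_ fun x => ?_
    · refine integrable_finsetSum _ fun i _ => ?_
      refine Continuous.integrable_of_hasCompactSupport
        ((hχ n).continuous.mul (dR_continuous (hY i) i)) ?_
      exact (hχs n).mul_right
    · refine hJ.norm.mono ((hχ n).continuous.aestronglyMeasurable.mul hJ.1) ?_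
      refine Filter.Eventually.of_forall fun x => ?_
      rw [norm_mul, Real.norm_of_nonneg φ.nonneg, norm_norm]
      exact mul_le_of_le_one_left (norm_nonneg _) φ.le_one
    · simp only
      rw [← Finset.mul_sum]
      exact mul_le_mul_of_nonneg_left (hdiv x) φ.nonneg
  · intro i _
    refine Continuous.integrable_of_hasCompactSupport ((hχ n).continuous.mul (dR_continuous (hY i) i)) ?_
    exact (hχs n).mul_right

/-! ### Partial derivatives and the Morawetz vector field -/

section calculus
variable {d : ℕ} {f g : Ed d → ℝ} {x : Ed d}

lemma dR_add (i : Fin d) (hf : DifferentiableAt ℝ f x) (hg : DifferentiableAt ℝ g x) :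
    dR (fun y => f y + g y) i x = dR f i x + dR g i x := by
  rw [dR, fderiv_fun_add hf hg]
  simp [dR]

lemma dR_mul (i : Fin d) (hf : DifferentiableAt ℝ f x) (hg : DifferentiableAt ℝ g x) :
    dR (fun y => f y * g y) i x = f x * dR g i x + dR f i x * g x := by
  rw [dR, fderiv_fun_mul hf hg]
  simp [dR, mul_comm]

lemma dR_neg (i : Fin d) : dR (fun y => - f y) i x = - dR f i x := by
  simp [dR]

lemma dR_const_mul (i : Fin d) (c : ℝ) (hf : DifferentiableAt ℝ f x) :
    dR (fun y => c * f y) i x = c * dR f i x := by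
  rw [dR, fderiv_const_mul hf]
  simp [dR]

lemma dR_pow (i : Fin d) (n : ℕ) (hf : DifferentiableAt ℝ f x) :
    dR (fun y => f y ^ n) i x = n * f x ^ (n - 1) * dR f i x := by
  rw [dR, fderiv_fun_pow n hf]
  simp [dR]

lemma dR_sum {ι : Type*} (s : Finset ι) {F : ι → Ed d → ℝ} (i : Fin d)
    (hF : ∀ j ∈ s, DifferentiableAt ℝ (F j) x) :
    dR (fun y => ∑ j ∈ s, F j y) i x = ∑ j ∈ s, dR (F j) i x := by
  rw [dR, fderiv_fun_sum hF]
  simp [dR]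

lemma dR_coord (i j : Fin d) : dR (fun y : Ed d => y j) i x = if j = i then 1 else 0 := by
  have : HasFDerivAt (fun y : Ed d => y j) (EuclideanSpace.proj j : Ed d →L[ℝ] ℝ) x :=
    (EuclideanSpace.proj (𝕜 := ℝ) j).hasFDerivAt
  rw [dR, this.fderiv]
  simp

end calculus

/-- The radial weight `(R² + |x|²)^{-1/2}`. -/
def bet {d : ℕ} (R : ℝ) (x : Ed d) : ℝ := (Real.sqrt (R ^ 2 + ‖x‖ ^ 2))⁻¹

section bet
variable {d : ℕ} {R : ℝ}

lemma bet_pos (hR : 0 < R) (x : Ed d) : 0 < bet R x := by unfold bet; positivity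

lemma bet_sq (hR : 0 < R) (x : Ed d) : bet R x ^ 2 * (R ^ 2 + ‖x‖ ^ 2) = 1 := by
  unfold bet
  rw [inv_pow, Real.sq_sqrt (by positivity)]
  field_simp

lemma bet_contDiff (hR : 0 < R) {n : WithTop ℕ∞} : ContDiff ℝ n (bet (d := d) R) := by
  unfold bet
  refine ContDiff.inv (ContDiff.sqrt (contDiff_const.add (contDiff_norm_sq ℝ)) ?_) ?_
  · intro x; positivity
  · intro x; positivity

lemma dR_bet (hR : 0 < R) (x : Ed d) (i : Fin d) : dR (bet R) i x = - (x i * bet R x ^ 3) := by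
  have h0 : (0:ℝ) < R ^ 2 + ‖x‖ ^ 2 := by positivity
  have h1 : HasFDerivAt (fun y : Ed d => R ^ 2 + ‖y‖ ^ 2) (2 • (innerSL ℝ x)) x :=
    ((hasStrictFDerivAt_norm_sq x).hasFDerivAt).const_add _
  have h2 := (h1.sqrt h0.ne')
  have h3 := (hasDerivAt_inv (Real.sqrt_pos.2 h0).ne').comp_hasFDerivAt x h2
  have h4 : HasFDerivAt (bet R) _ x := h3
  rw [dR, h4.fderiv]
  simp only [bet, smul_apply, innerSL_apply_apply, smul_eq_mul,
    EuclideanSpace.inner_single_right]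
  simp
  have := (Real.sqrt_pos.2 h0).ne'
  field_simp

end bet

/-- Euler derivative `x · ∇w`. -/
def eul {d : ℕ} (w : Ed d → ℝ) (x : Ed d) : ℝ := ∑ j, x j * dR w j x

/-- `|∇w|²` for real `w`. -/
def gsq {d : ℕ} (w : Ed d → ℝ) (x : Ed d) : ℝ := ∑ j, dR w j x ^ 2

/-- Laplacian of a real function. -/
def lapR {d : ℕ} (w : Ed d → ℝ) (x : Ed d) : ℝ := ∑ j, dR (dR w j) j x

/-- The flux belonging to the multiplier `β (x·∇w + κ w)`, `β = bet R`, for the operator `-Δ + Z`: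
`-∇w β(x·∇w + κw) + ½ β x |∇w|² - (κ/2) β³ x w² + ½ Z β x w²`. -/
def morY {d : ℕ} (R κ : ℝ) (Z w : Ed d → ℝ) (i : Fin d) (x : Ed d) : ℝ :=
  - (dR w i x * (bet R x * (eul w x + κ * w x))) + (1/2) * (bet R x * (x i * gsq w x))
    + (-(κ/2)) * (w x ^ 2 * (x i * bet R x ^ 3)) + (1/2) * (Z x * (bet R x * (x i * w x ^ 2)))

section mor
variable {d : ℕ} {w Z : Ed d → ℝ}

lemma dR_contDiff (hw : ContDiff ℝ 2 w) (i : Fin d) : ContDiff ℝ 1 (dR w i) := by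
  unfold dR
  exact (hw.fderiv_right (m := 1) (by norm_num)).clm_apply contDiff_const

lemma coord_contDiff {n : WithTop ℕ∞} (i : Fin d) : ContDiff ℝ n (fun x : Ed d => x i) :=
  (EuclideanSpace.proj (𝕜 := ℝ) i).contDiff

lemma dR_symm (hw : ContDiff ℝ 2 w) (i j : Fin d) (x : Ed d) :
    dR (dR w j) i x = dR (dR w i) j x := by
  have hs := (hw.contDiffAt (x := x)).isSymmSndFDerivAt (by simp)
  have hd : DifferentiableAt ℝ (fderiv ℝ w) x :=
    (hw.fderiv_right (m := 1) (by norm_num)).differentiable (by norm_num) x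
  have key : ∀ v v' : Ed d, fderiv ℝ (fun y => fderiv ℝ w y v) x v' = fderiv ℝ (fderiv ℝ w) x v' v := by
    intro v v'
    rw [fderiv_clm_apply hd (differentiableAt_const v)]
    simp
  simp only [dR]
  erw [key, key]
  exact hs.eq _ _

lemma eul_contDiff (hw : ContDiff ℝ 2 w) : ContDiff ℝ 1 (eul w) := by
  unfold eul
  exact ContDiff.sum fun j _ => (coord_contDiff j).mul (dR_contDiff hw j)

lemma gsq_contDiff (hw : ContDiff ℝ 2 w) : ContDiff ℝ 1 (gsq w) := by
  unfold gsq
  exact ContDiff.sum fun j _ => (dR_contDiff hw j).pow 2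

lemma morY_contDiff {R : ℝ} (hR : 0 < R) (κ : ℝ) (hw : ContDiff ℝ 2 w) (hZ : ContDiff ℝ 1 Z)
    (i : Fin d) : ContDiff ℝ 1 (morY R κ Z w i) := by
  have h1 := dR_contDiff hw i
  have h2 := eul_contDiff hw
  have h3 := gsq_contDiff hw
  have h4 : ContDiff ℝ 1 (bet (d := d) R) := bet_contDiff hR
  have h5 : ContDiff ℝ 1 w := hw.of_le (by norm_num)
  have h6 : ContDiff ℝ 1 (fun x : Ed d => x i) := coord_contDiff i
  unfold morY
  fun_prop

lemma dR_morY {R : ℝ} (hR : 0 < R) (κ : ℝ) (hw : ContDiff ℝ 2 w) (hZ : ContDiff ℝ 1 Z)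
    (i : Fin d) (x : Ed d) : dR (morY R κ Z w i) i x =
    - (dR (dR w i) i x * (bet R x * (eul w x + κ * w x))
      + dR w i x * (- (x i * bet R x ^ 3) * (eul w x + κ * w x)
        + bet R x * (dR w i x + ∑ j, x j * dR (dR w j) i x + κ * dR w i x)))
    + (1/2) * (- (x i * bet R x ^ 3) * (x i * gsq w x) + bet R x * gsq w x
        + bet R x * x i * (2 * ∑ j, dR w j x * dR (dR w j) i x))
    - (κ/2) * (2 * w x * dR w i x * x i * bet R x ^ 3 + w x ^ 2 * bet R x ^ 3
        - 3 * w x ^ 2 * x i ^ 2 * bet R x ^ 5)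
    + (1/2) * (dR Z i x * bet R x * x i * w x ^ 2 + Z x * (-(x i * bet R x ^ 3) * x i * w x ^ 2
        + bet R x * w x ^ 2 + 2 * bet R x * x i * w x * dR w i x)) := by
  have h1 : DifferentiableAt ℝ (dR w i) x := (dR_contDiff hw i).differentiable (by norm_num) x
  have h1' : ∀ j, DifferentiableAt ℝ (dR w j) x :=
    fun j => (dR_contDiff hw j).differentiable (by norm_num) x
  have h2 : DifferentiableAt ℝ (eul w) x := (eul_contDiff hw).differentiable (by norm_num) x
  have h3 : DifferentiableAt ℝ (gsq w) x := (gsq_contDiff hw).differentiable (by norm_num) x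
  have h4 : DifferentiableAt ℝ (bet (d := d) R) x :=
    (bet_contDiff (n := 1) hR).differentiable (by norm_num) x
  have h5 : DifferentiableAt ℝ w x := hw.differentiable (by norm_num) x
  have h6 : ∀ i, DifferentiableAt ℝ (fun x : Ed d => x i) x :=
    fun i => (coord_contDiff (n := 1) i).differentiable (by norm_num) x
  have h6i := h6 i
  have h7 : DifferentiableAt ℝ Z x := hZ.differentiable (by norm_num) x
  have hE : dR (eul w) i x = dR w i x + ∑ j, x j * dR (dR w j) i x := by
    unfold eul
    rw [dR_sum _ _ (fun j _ => by have := h6 j; have := h1' j; fun_prop)]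
    simp_rw [dR_mul i (h6 _) (h1' _), dR_coord]
    rw [Finset.sum_add_distrib]
    simp [add_comm]
  have hQ : dR (gsq w) i x = 2 * ∑ j, dR w j x * dR (dR w j) i x := by
    unfold gsq
    rw [dR_sum _ _ (fun j _ => by have := h1' j; fun_prop)]
    simp_rw [dR_pow i 2 (h1' _)]
    rw [Finset.mul_sum]
    refine Finset.sum_congr rfl fun j _ => ?_
    simp; ring
  unfold morY
  rw [dR_add, dR_add, dR_add, dR_neg, dR_mul i h1, dR_mul i h4, dR_add i h2, dR_const_mul i κ h5,
    dR_const_mul, dR_mul i h4, dR_mul i h6i h3, dR_const_mul, dR_mul, dR_mul i h6i, dR_pow i 2 h5,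
    dR_pow i 3 h4, dR_const_mul, dR_mul i h7, dR_mul i h4, dR_mul i h6i, dR_pow i 2 h5,
    hE, hQ, dR_bet hR, dR_coord]
  · simp; ring
  all_goals fun_prop

/-- The Morawetz identity: the divergence of the flux is `(-Δw + Zw)` times the multiplier, minus a
quadratic form in `∇w` and `w`, plus the potential terms. The second derivatives of `w` that are not
part of `Δw` cancel by symmetry of the Hessian. -/
lemma div_morY {R : ℝ} (hR : 0 < R) (κ : ℝ) (hw : ContDiff ℝ 2 w) (hZ : ContDiff ℝ 1 Z)
    (hκ : κ = ((d:ℝ) - 1) / 2) (x : Ed d) : ∑ i, dR (morY R κ Z w i) i x =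
    (- lapR w x + Z x * w x) * (bet R x * (eul w x + κ * w x))
    - (gsq w x * (bet R x / 2 + ‖x‖ ^ 2 * bet R x ^ 3 / 2) - bet R x ^ 3 * eul w x ^ 2
        + κ / 2 * (d * bet R x ^ 3 - 3 * ‖x‖ ^ 2 * bet R x ^ 5) * w x ^ 2)
    + 1 / 2 * w x ^ 2 * bet R x * eul Z x
    + 1 / 2 * Z x * (bet R x - ‖x‖ ^ 2 * bet R x ^ 3) * w x ^ 2 := by
  simp_rw [dR_morY hR κ hw hZ]
  have hs : ∑ i, x i ^ 2 = ‖x‖ ^ 2 := by rw [EuclideanSpace.real_norm_sq_eq]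
  have hD : ∑ i, x i * ∑ j, dR w j x * dR (dR w j) i x
      = ∑ i, dR w i x * ∑ j, x j * dR (dR w j) i x := by
    simp_rw [Finset.mul_sum]
    rw [Finset.sum_comm]
    refine Finset.sum_congr rfl fun i _ => Finset.sum_congr rfl fun j _ => ?_
    rw [dR_symm hw j i]; ring
  set D := ∑ i, dR w i x * ∑ j, x j * dR (dR w j) i x with hDdef
  set b := bet R x
  set E := eul w x with hE
  set Q := gsq w x with hQ
  have hE' : ∑ i, x i * dR w i x = E := rfl
  have hQ' : ∑ i, dR w i x ^ 2 = Q := rfl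
  have hL' : ∑ i, dR (dR w i) i x = lapR w x := rfl
  have hZ' : ∑ i, x i * dR Z i x = eul Z x := rfl
  calc _ = ∑ i, ((-(b * (E + κ * w x))) * dR (dR w i) i x
        + (b ^ 3 * (E + κ * w x) - κ * w x * b ^ 3 + Z x * b * w x) * (x i * dR w i x)
        + (- b * (1 + κ)) * dR w i x ^ 2
        + (-b) * (dR w i x * ∑ j, x j * dR (dR w j) i x)
        + b * (x i * ∑ j, dR w j x * dR (dR w j) i x)
        + (- b^3 * Q / 2 + 3 * κ / 2 * w x ^ 2 * b ^ 5 - Z x * b ^ 3 * w x ^ 2 / 2) * x i ^ 2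
        + (b * w x ^ 2 / 2) * (x i * dR Z i x)
        + (b * Q / 2 - κ / 2 * w x ^ 2 * b ^ 3 + Z x * b * w x ^ 2 / 2)) := by
        refine Finset.sum_congr rfl fun i _ => ?_
        ring
    _ = _ := by
        simp only [Finset.sum_add_distrib, ← Finset.mul_sum]
        rw [hL', hE', hQ', hZ', hs, hD, ← hDdef]
        simp only [Finset.sum_const, Finset.card_univ, Fintype.card_fin, nsmul_eq_mul]
        rw [hκ]
        ring
end mor

/-! ### Morawetz and energy inequalities -/

/-- Cauchy–Schwarz in `ℝ²`, with upper bounds in place of the norms. -/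
lemma cs2 {a₁ a₂ b₁ b₂ X Y : ℝ} (hX : 0 ≤ X) (hY : 0 ≤ Y) (ha : a₁ ^ 2 + a₂ ^ 2 ≤ X ^ 2)
    (hb : b₁ ^ 2 + b₂ ^ 2 ≤ Y ^ 2) : |a₁ * b₁ + a₂ * b₂| ≤ X * Y := by
  apply abs_le_of_sq_le_sq _ (by positivity)
  nlinarith [sq_nonneg (a₁ * b₂ - a₂ * b₁), mul_le_mul ha hb (by positivity) (by positivity)]

lemma integrable_mul_of_sq {d : ℕ} {f g : Ed d → ℝ} (hf : Continuous f) (hg : Continuous g)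
    (hf2 : Integrable fun x => f x ^ 2) (hg2 : Integrable fun x => g x ^ 2) :
    Integrable fun x => f x * g x := by
  refine (hf2.add hg2).mono' (hf.mul hg).aestronglyMeasurable (Filter.Eventually.of_forall fun x => ?_)
  simp only [Pi.add_apply, Real.norm_eq_abs]
  rw [abs_le]
  constructor <;> nlinarith [sq_nonneg (f x - g x), sq_nonneg (f x + g x), sq_nonneg (f x), sq_nonneg (g x)]

lemma integrable_bdd_mul {d : ℕ} {f g : Ed d → ℝ} (K : ℝ) (hf : Continuous f) (hfb : ∀ x, |f x| ≤ K)
    (hg : Integrable g) : Integrable fun x => f x * g x :=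
  hg.bdd_mul (c := K) hf.aestronglyMeasurable (Filter.Eventually.of_forall hfb)

lemma eul_sq_le {d : ℕ} (w : Ed d → ℝ) (x : Ed d) : eul w x ^ 2 ≤ ‖x‖ ^ 2 * gsq w x := by
  unfold eul gsq
  rw [EuclideanSpace.real_norm_sq_eq]
  exact Finset.sum_mul_sq_le_sq_mul_sq _ _ _

lemma dR_sq_le {d : ℕ} (w : Ed d → ℝ) (i : Fin d) (x : Ed d) : dR w i x ^ 2 ≤ gsq w x :=
  Finset.single_le_sum (f := fun j => dR w j x ^ 2) (fun _ _ => sq_nonneg _) (Finset.mem_univ i)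

lemma gsq_nonneg {d : ℕ} (w : Ed d → ℝ) (x : Ed d) : 0 ≤ gsq w x :=
  Finset.sum_nonneg fun _ _ => sq_nonneg _

lemma bet_le {d : ℕ} {R : ℝ} (hR : 0 < R) (x : Ed d) : bet R x * R ≤ 1 := by
  have h := bet_sq hR x
  have hb := bet_pos hR x
  have : (bet R x * R) ^ 2 ≤ 1 := by nlinarith [sq_nonneg (bet R x * ‖x‖)]
  exact (abs_le_one_iff_mul_self_le_one.2 (by nlinarith) |> (abs_le.1 · |>.2))

lemma bet_norm_le {d : ℕ} {R : ℝ} (hR : 0 < R) (x : Ed d) : bet R x * ‖x‖ ≤ 1 := by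
  have h := bet_sq hR x
  have hb := bet_pos hR x
  exact (abs_le_one_iff_mul_self_le_one.2 (by nlinarith [sq_nonneg (bet R x * R)]) |> (abs_le.1 · |>.2))

lemma coord_le {d : ℕ} (x : Ed d) (i : Fin d) : |x i| ≤ ‖x‖ := by
  simpa using PiLp.norm_apply_le x i

lemma lapR_continuous {d : ℕ} {w : Ed d → ℝ} (hw : ContDiff ℝ 2 w) : Continuous (lapR w) := by
  unfold lapR
  exact continuous_finsetSum _ fun j _ => dR_continuous (dR_contDiff hw j) j

lemma morY_integrable {d : ℕ} {w Z : Ed d → ℝ} {R κ Zb : ℝ} (hR : 0 < R)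
    (hw : ContDiff ℝ 2 w) (hZ : ContDiff ℝ 1 Z) (hZb : ∀ x, |Z x| ≤ Zb)
    (hw2 : Integrable fun x => w x ^ 2) (hg2 : Integrable (gsq w)) (i : Fin d) :
    Integrable (morY R κ Z w i) := by
  have hZb0 : 0 ≤ Zb := (abs_nonneg _).trans (hZb 0)
  have hb := bet_contDiff (d := d) hR (n := 1)
  have cb := hb.continuous
  have bb : ∀ x : Ed d, |bet R x| ≤ R⁻¹ := fun x => by
    rw [abs_of_pos (bet_pos hR x), ← one_div, le_div_iff₀ hR]; exact bet_le hR x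
  have bx : ∀ x : Ed d, |bet R x * x i| ≤ 1 := fun x => by
    rw [abs_mul, abs_of_pos (bet_pos hR x)]
    exact (mul_le_mul_of_nonneg_left (coord_le x i) (bet_pos hR x).le).trans (bet_norm_le hR x)
  have cx : Continuous fun x : Ed d => x i := (coord_contDiff (n := 1) i).continuous
  have cw := hw.continuous
  have cP := (dR_contDiff hw i).continuous
  have cE := (eul_contDiff hw).continuous
  have iP : Integrable fun x => dR w i x ^ 2 := by
    refine hg2.mono' (cP.pow 2).aestronglyMeasurable (Filter.Eventually.of_forall fun x => ?_)
    rw [Real.norm_of_nonneg (sq_nonneg _)]; exact dR_sq_le w i x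
  have iE : Integrable fun x => (bet R x * eul w x) ^ 2 := by
    refine hg2.mono' ((cb.mul cE).pow 2).aestronglyMeasurable
      (Filter.Eventually.of_forall fun x => ?_)
    rw [Real.norm_of_nonneg (sq_nonneg _), mul_pow]
    have h1 := eul_sq_le w x
    have h2 := bet_norm_le hR x
    have h3 := bet_pos hR x
    calc bet R x ^ 2 * eul w x ^ 2 ≤ bet R x ^ 2 * (‖x‖ ^ 2 * gsq w x) := by gcongr
      _ = (bet R x * ‖x‖) ^ 2 * gsq w x := by ring
      _ ≤ 1 * gsq w x := by
        have := gsq_nonneg w x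
        gcongr
        exact pow_le_one₀ (by positivity) h2
      _ = gsq w x := one_mul _
  have t1 := integrable_mul_of_sq cP (cb.mul cE) iP iE
  have t2 := integrable_bdd_mul (R⁻¹) cb bb (integrable_mul_of_sq cP cw iP hw2)
  have t3 := integrable_bdd_mul 1 (cb.mul cx) bx hg2
  have t4 := integrable_bdd_mul 1 (cb.mul cx) bx (integrable_bdd_mul (R⁻¹ ^ 2) (cb.pow 2)
    (fun x => by simp only [Pi.pow_apply, abs_pow]; exact pow_le_pow_left₀ (abs_nonneg _) (bb x) 2) hw2)
  have t5 := integrable_bdd_mul 1 (cb.mul cx) bx (integrable_bdd_mul Zb hZ.continuous hZb hw2)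
  refine ((((t1.neg.sub (t2.const_mul κ)).add (t3.const_mul (1/2))).sub
    (t4.const_mul (κ/2))).add (t5.const_mul (1/2))).congr (Filter.Eventually.of_forall fun x => ?_)
  simp [morY]
  ring

section main
variable {d : ℕ} {p q Z b n g H : Ed d → ℝ} {e κ : ℝ}

/-- The integrated Morawetz inequality for `u = p + iq`, with `n = |u|`, `g = |∇u|`,
`H = |-Δu + Zu + ieu|` and `b` an upper bound for `∂_r Z`. It is the sum of the identities `div_morY`
for `p` and `q`; the right-hand side uses `|x·∇u| ≤ |x||∇u|` and `β|x| ≤ 1`. -/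
theorem morawetz (hd : 3 ≤ d) {R Zb Kb : ℝ} (hR : 0 < R) (hκ : κ = ((d:ℝ) - 1) / 2)
    (hp : ContDiff ℝ 2 p) (hq : ContDiff ℝ 2 q) (hZ : ContDiff ℝ 1 Z) (hZb : ∀ x, |Z x| ≤ Zb)
    (hb : Continuous b) (hb0 : ∀ x, 0 ≤ b x) (hbb : ∀ x, b x ≤ Kb)
    (hZe : ∀ x, eul Z x ≤ ‖x‖ * b x)
    (cn : Continuous n) (cg : Continuous g) (cH : Continuous H)
    (n0 : ∀ x, 0 ≤ n x) (g0 : ∀ x, 0 ≤ g x) (H0 : ∀ x, 0 ≤ H x)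
    (hn : ∀ x, n x ^ 2 = p x ^ 2 + q x ^ 2) (hg : ∀ x, g x ^ 2 = gsq p x + gsq q x)
    (hH : ∀ x, H x ^ 2 = (- lapR p x + Z x * p x - e * q x) ^ 2
      + (- lapR q x + Z x * q x + e * p x) ^ 2)
    (in2 : Integrable fun x => n x ^ 2) (ig2 : Integrable fun x => g x ^ 2)
    (iH2 : Integrable fun x => H x ^ 2) :
    Integrable (fun x => 1/2 * R ^ 2 * bet R x ^ 3 * (g x ^ 2 + (- Z x) * n x ^ 2)
      + κ / 2 * (d * R ^ 2 + (d - 3) * ‖x‖ ^ 2) * bet R x ^ 5 * n x ^ 2) ∧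
    ∫ x, (1/2 * R ^ 2 * bet R x ^ 3 * (g x ^ 2 + (- Z x) * n x ^ 2)
      + κ / 2 * (d * R ^ 2 + (d - 3) * ‖x‖ ^ 2) * bet R x ^ 5 * n x ^ 2)
    ≤ 1/2 * (∫ x, b x * n x ^ 2) + (∫ x, H x * g x) + κ * (∫ x, H x * (bet R x * n x))
      + |e| * (∫ x, n x * g x) := by
  have hd' : (3:ℝ) ≤ d := by exact_mod_cast hd
  have hκ0 : 0 ≤ κ := by rw [hκ]; linarith
  have cb := (bet_contDiff (d := d) hR (n := 1)).continuous
  have bb : ∀ x : Ed d, |bet R x| ≤ R⁻¹ := fun x => by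
    rw [abs_of_pos (bet_pos hR x), ← one_div, le_div_iff₀ hR]; exact bet_le hR x
  have iHg := integrable_mul_of_sq cH cg iH2 ig2
  have iHn := integrable_mul_of_sq cH cn iH2 in2
  have ing := integrable_mul_of_sq cn cg in2 ig2
  have ibn : Integrable fun x => b x * n x ^ 2 :=
    integrable_bdd_mul Kb hb (fun x => by rw [abs_of_nonneg (hb0 x)]; exact hbb x) in2
  have iHbn : Integrable fun x => H x * (bet R x * n x) :=
    (integrable_bdd_mul R⁻¹ cb bb iHn).congr (Filter.Eventually.of_forall fun x => by simp; ring)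
  have hb3 : ∀ x : Ed d, |1/2 * R ^ 2 * bet R x ^ 3| ≤ 1/2 * R ^ 2 * R⁻¹ ^ 3 := fun x => by
    rw [abs_mul, abs_of_nonneg (by positivity : 0 ≤ 1/2 * R^2), abs_pow]
    gcongr
    exact bb x
  have hb5 : ∀ x : Ed d, |κ / 2 * (d * R ^ 2 + (d - 3) * ‖x‖ ^ 2) * bet R x ^ 5|
      ≤ κ / 2 * d * R⁻¹ ^ 3 := fun x => by
    have h1 := bet_sq hR x
    have h2 := bet_pos hR x
    have h3 : 0 ≤ (d:ℝ) - 3 := by linarith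
    rw [abs_of_nonneg (by positivity)]
    have h4 : bet R x ^ 3 ≤ R⁻¹ ^ 3 := by
      gcongr; exact (le_abs_self _).trans (bb x)
    calc _ = κ / 2 * bet R x ^ 3 * (bet R x ^ 2 * (d * R ^ 2 + (d - 3) * ‖x‖ ^ 2)) := by ring
      _ ≤ κ / 2 * bet R x ^ 3 * (bet R x ^ 2 * (d * (R ^ 2 + ‖x‖ ^ 2))) := by
          gcongr; nlinarith [sq_nonneg ‖x‖]
      _ = κ / 2 * d * bet R x ^ 3 * (bet R x ^ 2 * (R ^ 2 + ‖x‖ ^ 2)) := by ring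
      _ = κ / 2 * d * bet R x ^ 3 := by rw [h1, mul_one]
      _ ≤ _ := by gcongr
  have iW : Integrable (fun x => 1/2 * R ^ 2 * bet R x ^ 3 * (g x ^ 2 + (- Z x) * n x ^ 2)
      + κ / 2 * (d * R ^ 2 + (d - 3) * ‖x‖ ^ 2) * bet R x ^ 5 * n x ^ 2) := by
    refine Integrable.add ?_ ?_
    · refine integrable_bdd_mul _ (by fun_prop) hb3 (ig2.add ?_)
      exact integrable_bdd_mul Zb hZ.continuous.neg (fun x => by simpa using hZb x) in2
    · exact integrable_bdd_mul _ (by fun_prop) hb5 in2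
  refine ⟨iW, ?_⟩
  have ip2 : Integrable fun x => p x ^ 2 := in2.mono' (hp.continuous.pow 2).aestronglyMeasurable
    (Filter.Eventually.of_forall fun x => by
      rw [Real.norm_of_nonneg (sq_nonneg _), hn]; nlinarith [sq_nonneg (q x)])
  have iq2 : Integrable fun x => q x ^ 2 := in2.mono' (hq.continuous.pow 2).aestronglyMeasurable
    (Filter.Eventually.of_forall fun x => by
      rw [Real.norm_of_nonneg (sq_nonneg _), hn]; nlinarith [sq_nonneg (p x)])
  have igp : Integrable (gsq p) := ig2.mono' (gsq_contDiff hp).continuous.aestronglyMeasurable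
    (Filter.Eventually.of_forall fun x => by
      rw [Real.norm_of_nonneg (gsq_nonneg _ _), hg]; linarith [gsq_nonneg q x])
  have igq : Integrable (gsq q) := ig2.mono' (gsq_contDiff hq).continuous.aestronglyMeasurable
    (Filter.Eventually.of_forall fun x => by
      rw [Real.norm_of_nonneg (gsq_nonneg _ _), hg]; linarith [gsq_nonneg p x])
  have iA1 : Integrable fun x => 1/2 * (b x * n x ^ 2) + H x * g x := (ibn.const_mul _).add iHg
  have iA2 : Integrable fun x => 1/2 * (b x * n x ^ 2) + H x * g x + κ * (H x * (bet R x * n x)) :=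
    iA1.add (iHbn.const_mul _)
  have iA3 : Integrable fun x => 1/2 * (b x * n x ^ 2) + H x * g x + κ * (H x * (bet R x * n x))
      + |e| * (n x * g x) := iA2.add (ing.const_mul _)
  have key := integral_nonneg_of_div_le
    (Y := fun i x => morY R κ Z p i x + morY R κ Z q i x)
    (J := fun x => (1/2 * (b x * n x ^ 2) + H x * g x + κ * (H x * (bet R x * n x))
      + |e| * (n x * g x)) - (1/2 * R ^ 2 * bet R x ^ 3 * (g x ^ 2 + (- Z x) * n x ^ 2)
      + κ / 2 * (d * R ^ 2 + (d - 3) * ‖x‖ ^ 2) * bet R x ^ 5 * n x ^ 2))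
    (fun i => (morY_contDiff hR κ hp hZ i).add (morY_contDiff hR κ hq hZ i))
    (fun i => (morY_integrable hR hp hZ hZb ip2 igp i).add
      (morY_integrable hR hq hZ hZb iq2 igq i))
    (iA3.sub iW) ?_
  · rw [integral_sub iA3 iW, integral_add iA2 (ing.const_mul _), integral_add iA1 (iHbn.const_mul _),
      integral_add (ibn.const_mul _) iHg, integral_const_mul, integral_const_mul,
      integral_const_mul] at key
    linarith
  · intro x
    have e1 : ∀ i, dR (fun x => morY R κ Z p i x + morY R κ Z q i x) i x
        = dR (morY R κ Z p i) i x + dR (morY R κ Z q i) i x := fun i =>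
      dR_add i ((morY_contDiff hR κ hp hZ i).differentiable (by norm_num) x)
        ((morY_contDiff hR κ hq hZ i).differentiable (by norm_num) x)
    simp_rw [e1]
    rw [Finset.sum_add_distrib, div_morY hR κ hp hZ hκ, div_morY hR κ hq hZ hκ]
    have hbp := bet_pos hR x
    have hbs := bet_sq hR x
    have hbn := bet_norm_le hR x
    have hEp := eul_sq_le p x
    have hEq := eul_sq_le q x
    have hnx := hn x
    have hgx := hg x
    have hHx := hH x
    have hZex := hZe x
    set β := bet R x
    set h₁ := - lapR p x + Z x * p x - e * q x with hh₁
    set h₂ := - lapR q x + Z x * q x + e * p x with hh₂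
    have E1 : - lapR p x + Z x * p x = h₁ + e * q x := by rw [hh₁]; ring
    have E2 : - lapR q x + Z x * q x = h₂ - e * p x := by rw [hh₂]; ring
    rw [E1, E2]
    -- Cauchy-Schwarz for the pairings of `h`, `u` with the radial derivative
    have hrg : eul p x ^ 2 + eul q x ^ 2 ≤ (‖x‖ * g x) ^ 2 := by
      rw [mul_pow, hgx]; linarith
    have hrg0 : 0 ≤ ‖x‖ * g x := mul_nonneg (norm_nonneg _) (g0 x)
    have A1 := (abs_le.1 (cs2 (H0 x) hrg0 hHx.ge hrg)).2
    have A2 := (abs_le.1 (cs2 (H0 x) (n0 x) hHx.ge hnx.ge)).2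
    have A3 := cs2 (a₁ := q x) (a₂ := - p x) (n0 x) hrg0 (by rw [hnx]; ring_nf; rfl) hrg
    have B1 : β * (h₁ * eul p x + h₂ * eul q x) ≤ H x * g x := by
      calc _ ≤ β * (H x * (‖x‖ * g x)) := by gcongr
        _ = (β * ‖x‖) * (H x * g x) := by ring
        _ ≤ 1 * (H x * g x) := by
          have := mul_nonneg (H0 x) (g0 x)
          gcongr
        _ = _ := one_mul _
    have B2 : κ * β * (h₁ * p x + h₂ * q x) ≤ κ * β * (H x * n x) := by gcongr
    have B3 : β * (e * (q x * eul p x + -p x * eul q x)) ≤ |e| * (n x * g x) := by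
      calc _ ≤ β * |e * (q x * eul p x + -p x * eul q x)| := by gcongr; exact le_abs_self _
        _ ≤ β * (|e| * (n x * (‖x‖ * g x))) := by rw [abs_mul]; gcongr
        _ = (β * ‖x‖) * (|e| * (n x * g x)) := by ring
        _ ≤ 1 * (|e| * (n x * g x)) := by
          have := mul_nonneg (n0 x) (g0 x)
          gcongr
        _ = _ := one_mul _
    have B4 : 1 / 2 * n x ^ 2 * (β * eul Z x) ≤ 1/2 * (b x * n x ^ 2) := by
      calc _ ≤ 1 / 2 * n x ^ 2 * (β * (‖x‖ * b x)) := by gcongr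
        _ = (β * ‖x‖) * (1/2 * (b x * n x ^ 2)) := by ring
        _ ≤ 1 * (1/2 * (b x * n x ^ 2)) := by
          have := hb0 x
          gcongr
        _ = _ := one_mul _
    have B5 : β ^ 3 * (eul p x ^ 2 + eul q x ^ 2) ≤ β ^ 3 * (‖x‖ ^ 2 * g x ^ 2) := by
      gcongr; rw [← mul_pow]; exact hrg
    have C1 : β = β ^ 3 * (R ^ 2 + ‖x‖ ^ 2) := by linear_combination (-β) * hbs
    have C2 : β ^ 3 = β ^ 5 * (R ^ 2 + ‖x‖ ^ 2) := by linear_combination (-β ^ 3) * hbs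
    have D1 : gsq p x * (β / 2 + ‖x‖ ^ 2 * β ^ 3 / 2) + gsq q x * (β / 2 + ‖x‖ ^ 2 * β ^ 3 / 2)
        = g x ^ 2 * (1/2 * R ^ 2 * β ^ 3) + β ^ 3 * (‖x‖ ^ 2 * g x ^ 2) := by
      rw [hgx]; linear_combination ((gsq p x + gsq q x) / 2) * C1
    have D2 : κ / 2 * (d * β ^ 3 - 3 * ‖x‖ ^ 2 * β ^ 5) * p x ^ 2
        + κ / 2 * (d * β ^ 3 - 3 * ‖x‖ ^ 2 * β ^ 5) * q x ^ 2
        = κ / 2 * (d * R ^ 2 + (d - 3) * ‖x‖ ^ 2) * β ^ 5 * n x ^ 2 := by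
      rw [hnx]; linear_combination (κ / 2 * d * (p x ^ 2 + q x ^ 2)) * C2
    have D3 : 1 / 2 * Z x * (β - ‖x‖ ^ 2 * β ^ 3) * p x ^ 2
        + 1 / 2 * Z x * (β - ‖x‖ ^ 2 * β ^ 3) * q x ^ 2
        = 1/2 * R ^ 2 * β ^ 3 * (Z x * n x ^ 2) := by
      rw [hnx]; linear_combination (1 / 2 * Z x * (p x ^ 2 + q x ^ 2)) * C1
    have D4 : 1 / 2 * p x ^ 2 * β * eul Z x + 1 / 2 * q x ^ 2 * β * eul Z x
        = 1 / 2 * n x ^ 2 * (β * eul Z x) := by rw [hnx]; ring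
    have D5 : (h₁ + e * q x) * (β * (eul p x + κ * p x)) + (h₂ - e * p x) * (β * (eul q x + κ * q x))
        = β * (h₁ * eul p x + h₂ * eul q x) + κ * β * (h₁ * p x + h₂ * q x)
          + β * (e * (q x * eul p x + -p x * eul q x)) := by ring
    linarith


end main

section energy
variable {d : ℕ} {p q Z n g H : Ed d → ℝ} {e : ℝ}

/-- `|e| ∫ |u|² ≤ ∫ |h||u|` for `h = -Δu + Zu + ieu`: the imaginary part of the pairing of `h` with
`ū`, in which `-Δ` and `Z` do not contribute. -/
theorem energy_im
    (hp : ContDiff ℝ 2 p) (hq : ContDiff ℝ 2 q)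
    (cn : Continuous n) (cH : Continuous H) (n0 : ∀ x, 0 ≤ n x) (H0 : ∀ x, 0 ≤ H x)
    (hn : ∀ x, n x ^ 2 = p x ^ 2 + q x ^ 2)
    (hH : ∀ x, H x ^ 2 = (- lapR p x + Z x * p x - e * q x) ^ 2
      + (- lapR q x + Z x * q x + e * p x) ^ 2)
    (in2 : Integrable fun x => n x ^ 2) (igp : Integrable (gsq p)) (igq : Integrable (gsq q))
    (iH2 : Integrable fun x => H x ^ 2) :
    |e| * (∫ x, n x ^ 2) ≤ ∫ x, H x * n x := by
  have ip2 : Integrable fun x => p x ^ 2 := in2.mono' (hp.continuous.pow 2).aestronglyMeasurable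
    (Filter.Eventually.of_forall fun x => by
      rw [Real.norm_of_nonneg (sq_nonneg _), hn]; nlinarith [sq_nonneg (q x)])
  have iq2 : Integrable fun x => q x ^ 2 := in2.mono' (hq.continuous.pow 2).aestronglyMeasurable
    (Filter.Eventually.of_forall fun x => by
      rw [Real.norm_of_nonneg (sq_nonneg _), hn]; nlinarith [sq_nonneg (p x)])
  have iHn := integrable_mul_of_sq cH cn iH2 in2
  have idp : ∀ i, Integrable fun x => dR p i x ^ 2 := fun i =>
    igp.mono' ((dR_contDiff hp i).continuous.pow 2).aestronglyMeasurable
      (Filter.Eventually.of_forall fun x => by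
        rw [Real.norm_of_nonneg (sq_nonneg _)]; exact dR_sq_le p i x)
  have idq : ∀ i, Integrable fun x => dR q i x ^ 2 := fun i =>
    igq.mono' ((dR_contDiff hq i).continuous.pow 2).aestronglyMeasurable
      (Filter.Eventually.of_forall fun x => by
        rw [Real.norm_of_nonneg (sq_nonneg _)]; exact dR_sq_le q i x)
  have hp1 : ContDiff ℝ 1 p := hp.of_le (by norm_num)
  have hq1 : ContDiff ℝ 1 q := hq.of_le (by norm_num)
  have main : ∀ s : ℝ, s ^ 2 = 1 → s * e * (∫ x, n x ^ 2) ≤ ∫ x, H x * n x := by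
    intro s hs
    have key := integral_nonneg_of_div_le
      (Y := fun i x => s * (q x * dR p i x + (-1) * (p x * dR q i x)))
      (J := fun x => H x * n x - (s * e) * n x ^ 2)
      (fun i => contDiff_const.mul ((hq1.mul (dR_contDiff hp i)).add
        (contDiff_const.mul (hp1.mul (dR_contDiff hq i)))))
      (fun i => ((integrable_mul_of_sq hq.continuous (dR_contDiff hp i).continuous iq2 (idp i)).add
        ((integrable_mul_of_sq hp.continuous (dR_contDiff hq i).continuous ip2 (idq i)).const_mul
          (-1))).const_mul s)
      (iHn.sub (in2.const_mul _)) ?_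
    · rw [integral_sub iHn (in2.const_mul _), integral_const_mul] at key
      linarith
    · intro x
      have dp := hp1.differentiable (by norm_num) x
      have dq := hq1.differentiable (by norm_num) x
      have ddp := fun i => (dR_contDiff hp i).differentiable (by norm_num) x
      have ddq := fun i => (dR_contDiff hq i).differentiable (by norm_num) x
      have e1 : ∀ i, dR (fun x => s * (q x * dR p i x + (-1) * (p x * dR q i x))) i x
          = s * (q x * dR (dR p i) i x - p x * dR (dR q i) i x) := by
        intro i
        have D1 : DifferentiableAt ℝ (fun y => q y * dR p i y) x := dq.mul (ddp i)
        have D2 : DifferentiableAt ℝ (fun y => p y * dR q i y) x := dp.mul (ddq i)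
        have D3 : DifferentiableAt ℝ (fun y => (-1) * (p y * dR q i y)) x := D2.const_mul _
        have D4 : DifferentiableAt ℝ (fun y => q y * dR p i y + (-1) * (p y * dR q i y)) x :=
          D1.add D3
        rw [dR_const_mul i s D4, dR_add i D1 D3, dR_const_mul i (-1) D2, dR_mul i dp (ddq i), dR_mul i dq (ddp i)]
        ring
      simp_rw [e1]
      rw [← Finset.mul_sum, Finset.sum_sub_distrib, ← Finset.mul_sum, ← Finset.mul_sum]
      have := (abs_le.1 (cs2 (H0 x) (n0 x) (hH x).ge (b₁ := - (s * q x)) (b₂ := s * p x)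
        (by rw [hn x]; nlinarith))).2
      have h2 := hn x
      unfold lapR at this
      rw [h2]
      linarith
  rcases abs_cases e with ⟨h, _⟩ | ⟨h, _⟩
  · rw [h]; simpa using main 1 (by norm_num)
  · rw [h]; simpa using main (-1) (by norm_num)

/-- The real part of the pairing of `h = -Δu + Zu + ieu` with `ū`, when `-Z ≤ L`. -/
theorem energy_re {L : ℝ}
    (hp : ContDiff ℝ 2 p) (hq : ContDiff ℝ 2 q) (hZL : ∀ x, - Z x ≤ L)
    (cn : Continuous n) (cH : Continuous H) (n0 : ∀ x, 0 ≤ n x) (H0 : ∀ x, 0 ≤ H x)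
    (hn : ∀ x, n x ^ 2 = p x ^ 2 + q x ^ 2) (hg : ∀ x, g x ^ 2 = gsq p x + gsq q x)
    (hH : ∀ x, H x ^ 2 = (- lapR p x + Z x * p x - e * q x) ^ 2
      + (- lapR q x + Z x * q x + e * p x) ^ 2)
    (in2 : Integrable fun x => n x ^ 2) (igp : Integrable (gsq p)) (igq : Integrable (gsq q))
    (iH2 : Integrable fun x => H x ^ 2) :
    ∫ x, g x ^ 2 ≤ L * (∫ x, n x ^ 2) + ∫ x, H x * n x := by
  have ip2 : Integrable fun x => p x ^ 2 := in2.mono' (hp.continuous.pow 2).aestronglyMeasurable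
    (Filter.Eventually.of_forall fun x => by
      rw [Real.norm_of_nonneg (sq_nonneg _), hn]; nlinarith [sq_nonneg (q x)])
  have iq2 : Integrable fun x => q x ^ 2 := in2.mono' (hq.continuous.pow 2).aestronglyMeasurable
    (Filter.Eventually.of_forall fun x => by
      rw [Real.norm_of_nonneg (sq_nonneg _), hn]; nlinarith [sq_nonneg (p x)])
  have iHn := integrable_mul_of_sq cH cn iH2 in2
  have ig2 : Integrable fun x => g x ^ 2 := by
    simp_rw [hg]; exact igp.add igq
  have idp : ∀ i, Integrable fun x => dR p i x ^ 2 := fun i =>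
    igp.mono' ((dR_contDiff hp i).continuous.pow 2).aestronglyMeasurable
      (Filter.Eventually.of_forall fun x => by
        rw [Real.norm_of_nonneg (sq_nonneg _)]; exact dR_sq_le p i x)
  have idq : ∀ i, Integrable fun x => dR q i x ^ 2 := fun i =>
    igq.mono' ((dR_contDiff hq i).continuous.pow 2).aestronglyMeasurable
      (Filter.Eventually.of_forall fun x => by
        rw [Real.norm_of_nonneg (sq_nonneg _)]; exact dR_sq_le q i x)
  have hp1 : ContDiff ℝ 1 p := hp.of_le (by norm_num)
  have hq1 : ContDiff ℝ 1 q := hq.of_le (by norm_num)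
  have iA : Integrable fun x => L * n x ^ 2 + H x * n x := (in2.const_mul L).add iHn
  have key := integral_nonneg_of_div_le
    (Y := fun i x => (-1) * (p x * dR p i x + q x * dR q i x))
    (J := fun x => (L * n x ^ 2 + H x * n x) - g x ^ 2)
    (fun i => contDiff_const.mul ((hp1.mul (dR_contDiff hp i)).add
      (hq1.mul (dR_contDiff hq i))))
    (fun i => ((integrable_mul_of_sq hp.continuous (dR_contDiff hp i).continuous ip2 (idp i)).add
      (integrable_mul_of_sq hq.continuous (dR_contDiff hq i).continuous iq2 (idq i))).const_mul (-1))
    (iA.sub ig2) ?_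
  · rw [integral_sub iA ig2, integral_add (in2.const_mul L) iHn, integral_const_mul] at key
    linarith
  · intro x
    have dp := hp1.differentiable (by norm_num) x
    have dq := hq1.differentiable (by norm_num) x
    have ddp := fun i => (dR_contDiff hp i).differentiable (by norm_num) x
    have ddq := fun i => (dR_contDiff hq i).differentiable (by norm_num) x
    have e1 : ∀ i, dR (fun x => (-1) * (p x * dR p i x + q x * dR q i x)) i x
        = - (p x * dR (dR p i) i x) - q x * dR (dR q i) i x - dR p i x ^ 2 - dR q i x ^ 2 := by
      intro i
      have D1 : DifferentiableAt ℝ (fun y => p y * dR p i y) x := dp.mul (ddp i)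
      have D2 : DifferentiableAt ℝ (fun y => q y * dR q i y) x := dq.mul (ddq i)
      have D3 : DifferentiableAt ℝ (fun y => p y * dR p i y + q y * dR q i y) x := D1.add D2
      rw [dR_const_mul i (-1) D3, dR_add i D1 D2, dR_mul i dp (ddp i), dR_mul i dq (ddq i)]
      ring
    simp_rw [e1]
    rw [Finset.sum_sub_distrib, Finset.sum_sub_distrib, Finset.sum_sub_distrib,
      Finset.sum_neg_distrib, ← Finset.mul_sum, ← Finset.mul_sum]
    have := (abs_le.1 (cs2 (H0 x) (n0 x) (hH x).ge (hn x).ge)).2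
    have h2 := hn x
    have h3 := hg x
    have h4 : - Z x * n x ^ 2 ≤ L * n x ^ 2 := by gcongr; exact hZL x
    unfold lapR at this
    unfold gsq at h3
    rw [h3]
    rw [h2] at h4 ⊢
    linarith
end energy

/-! ### Dyadic decomposition and duality -/

/-- `g` has mass at most `2^{j+1} K` on every shell `C_j`, `j ≥ jIdx ρ`, and at most `ρ K` on the
ball of radius `ρ`. -/
def Ann {d : ℕ} (ρ : ℝ) (g : Ed d → ℝ≥0∞) (K : ℝ≥0∞) : Prop :=
  (∀ j, jIdx ρ ≤ j → ∫⁻ x in shell d j, g x ≤ ENNReal.ofReal ((2:ℝ) ^ (j + 1)) * K) ∧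
    ∫⁻ x in ball (0 : Ed d) ρ, g x ≤ ENNReal.ofReal ρ * K

/-- `sup_{R ≥ ρ} R⁻³ ∫_{B(0,R)} g` -/
def nS {d : ℕ} (ρ : ℝ) (g : Ed d → ℝ≥0∞) : ℝ≥0∞ :=
  ⨆ (R : ℝ) (_ : ρ ≤ R), (ENNReal.ofReal (R ^ 3))⁻¹ * ∫⁻ x in ball (0 : Ed d) R, g x

lemma jIdx_spec {ρ : ℝ} (hρ : 0 < ρ) : (2:ℝ) ^ jIdx ρ < ρ ∧ ρ ≤ (2:ℝ) ^ (jIdx ρ + 1) := by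
  have h2 : (1:ℝ) < 2 := by norm_num
  have e : (2:ℝ) ^ (Real.logb 2 ρ) = ρ := Real.rpow_logb (by norm_num) (by norm_num) hρ
  constructor
  · rw [← Real.rpow_intCast]
    conv_rhs => rw [← e]
    rw [Real.rpow_lt_rpow_left_iff h2]
    have := Int.ceil_lt_add_one (Real.logb 2 ρ)
    simp only [jIdx]
    push_cast
    linarith
  · rw [← Real.rpow_intCast]
    conv_lhs => rw [← e]
    rw [Real.rpow_le_rpow_left_iff h2]
    have := Int.le_ceil (Real.logb 2 ρ)
    simp only [jIdx]
    push_cast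
    linarith

lemma measurableSet_shell (d : ℕ) (j : ℤ) : MeasurableSet (shell d j) :=
  (measurableSet_lt measurable_const measurable_norm).inter
    (measurableSet_le measurable_norm measurable_const)

lemma shell_cover {d : ℕ} {ρ : ℝ} (hρ : 0 < ρ) (x : Ed d) :
    x ∈ (⋃ j : {j : ℤ // jIdx ρ ≤ j}, shell d j) ∪ ball (0 : Ed d) ρ := by
  by_cases hx : ‖x‖ < ρ
  · right; simpa using hx
  · left
    push Not at hx
    have hx0 : 0 < ‖x‖ := hρ.trans_le hx
    refine mem_iUnion.2 ⟨⟨jIdx ‖x‖, ?_⟩, jIdx_spec hx0⟩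
    unfold jIdx
    have : Real.logb 2 ρ ≤ Real.logb 2 ‖x‖ := Real.logb_le_logb_of_le (by norm_num) hρ hx
    have := Int.ceil_le_ceil this
    omega

lemma lintegral_le_cover {d : ℕ} {ρ : ℝ} (hρ : 0 < ρ) (φ : Ed d → ℝ≥0∞) :
    ∫⁻ x, φ x ≤ (∑' j : {j : ℤ // jIdx ρ ≤ j}, ∫⁻ x in shell d j, φ x)
      + ∫⁻ x in ball (0 : Ed d) ρ, φ x := by
  have h : (univ : Set (Ed d)) ⊆ (⋃ j : {j : ℤ // jIdx ρ ≤ j}, shell d j) ∪ ball (0 : Ed d) ρ :=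
    fun x _ => shell_cover hρ x
  calc ∫⁻ x, φ x = ∫⁻ x in univ, φ x := by rw [Measure.restrict_univ]
    _ ≤ ∫⁻ x in (⋃ j : {j : ℤ // jIdx ρ ≤ j}, shell d j) ∪ ball (0 : Ed d) ρ, φ x :=
      lintegral_mono_set h
    _ ≤ (∫⁻ x in ⋃ j : {j : ℤ // jIdx ρ ≤ j}, shell d j, φ x) + _ := lintegral_union_le _ _ _
    _ ≤ _ := by gcongr; exact lintegral_iUnion_le _ _

/-- Cauchy–Schwarz on `s`, the factor `c` in the bound for `G` being moved to `F`. -/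
lemma pair_aux {d : ℕ} (s : Set (Ed d)) {F G : Ed d → ℝ≥0∞} (hF : Measurable F) (hG : Measurable G)
    {c K : ℝ≥0∞} (h : ∫⁻ x in s, G x ^ 2 ≤ c * K) :
    ∫⁻ x in s, F x * G x ≤ (c * ∫⁻ x in s, F x ^ 2) ^ (1/2 : ℝ) * K ^ (1/2 : ℝ) := by
  have hh := ENNReal.lintegral_mul_le_Lp_mul_Lq (volume.restrict s) (p := 2) (q := 2)
    Real.HolderConjugate.two_two hF.aemeasurable hG.aemeasurable
  simp only [ENNReal.rpow_two, Pi.mul_apply] at hh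
  calc _ ≤ _ := hh
    _ ≤ (∫⁻ x in s, F x ^ 2) ^ (1/2 : ℝ) * (c * K) ^ (1/2 : ℝ) := by gcongr
    _ = _ := by
      rw [ENNReal.mul_rpow_of_nonneg _ _ (by norm_num), ENNReal.mul_rpow_of_nonneg _ _ (by norm_num)]
      ring

/-- The duality of `X_ρ` and `X*_ρ`: Cauchy–Schwarz on every shell and on the ball of radius `ρ`. -/
theorem pairing {d : ℕ} {ρ : ℝ} (hρ : 0 < ρ) {F G : Ed d → ℝ≥0∞} (hF : Measurable F)
    (hG : Measurable G) {K : ℝ≥0∞} (h : Ann ρ (fun x => G x ^ 2) K) :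
    ∫⁻ x, F x * G x ≤ nXstarr ρ (fun x => F x ^ 2) * K ^ (1/2 : ℝ) := by
  refine (lintegral_le_cover hρ _).trans ?_
  unfold nXstarr
  rw [add_mul, ← ENNReal.tsum_mul_right]
  gcongr with j
  · exact pair_aux _ hF hG (h.1 j j.2)
  · exact pair_aux _ hF hG h.2

/-- The dyadic weight `2^{j+1} (1+2^j)^{-γ-1}`. -/
def wt (γ : ℝ) (j : ℤ) : ℝ := (2:ℝ) ^ (j + 1) * (1 + (2:ℝ) ^ j) ^ (-γ - 1)

lemma wt_nonneg (γ : ℝ) (j : ℤ) : 0 ≤ wt γ j := by unfold wt; positivity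

/-- The terms are `O(2^j)` at `-∞` and, because `γ > 0`, decay geometrically at `+∞`. -/
lemma wt_summable {γ : ℝ} (hγ : 0 < γ) : Summable (wt γ) := by
  apply Summable.of_nat_of_neg
  · have hs : Summable fun n : ℕ => 2 * ((2:ℝ) ^ (-γ)) ^ n :=
      (summable_geometric_of_lt_one (by positivity)
        (Real.rpow_lt_one_of_one_lt_of_neg (by norm_num) (by linarith))).mul_left 2
    refine Summable.of_nonneg_of_le (fun n => wt_nonneg _ _) (fun n => ?_) hs
    unfold wt
    rw [zpow_add₀ (by norm_num), zpow_one, zpow_natCast]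
    have h1 : (1 + (2:ℝ) ^ n) ^ (-γ - 1) ≤ ((2:ℝ) ^ n) ^ (-γ - 1) :=
      Real.rpow_le_rpow_of_nonpos (by positivity) (by linarith) (by linarith)
    calc (2:ℝ) ^ n * 2 * (1 + 2 ^ n) ^ (-γ - 1) ≤ (2:ℝ) ^ n * 2 * ((2:ℝ) ^ n) ^ (-γ - 1) := by gcongr
      _ = 2 * ((2:ℝ) ^ (-γ)) ^ n := by
        rw [← Real.rpow_natCast ((2:ℝ) ^ (-γ)), ← Real.rpow_mul (by norm_num), mul_comm (-γ),
          Real.rpow_mul (by norm_num), Real.rpow_natCast, Real.rpow_sub (by positivity), Real.rpow_one]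
        field_simp
  · have hs : Summable fun n : ℕ => 2 * (1/2 : ℝ) ^ n :=
      (summable_geometric_of_lt_one (by norm_num) (by norm_num)).mul_left 2
    refine Summable.of_nonneg_of_le (fun n => wt_nonneg _ _) (fun n => ?_) hs
    unfold wt
    rw [zpow_add₀ (by norm_num), zpow_one, zpow_neg, zpow_natCast]
    have h1 : (1 + ((2:ℝ) ^ n)⁻¹) ^ (-γ - 1) ≤ 1 :=
      Real.rpow_le_one_of_one_le_of_nonpos (by simp) (by linarith)
    calc ((2:ℝ) ^ n)⁻¹ * 2 * (1 + (2 ^ n)⁻¹) ^ (-γ - 1) ≤ ((2:ℝ) ^ n)⁻¹ * 2 * 1 := by gcongr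
      _ = 2 * (1/2 : ℝ) ^ n := by rw [one_div, inv_pow]; ring

/-- The potential weight `a (1+|x|)^{-γ-1}` integrates against any `g` with annular bound `K`
to at most `a (ρ + Σ_j wt γ j) K`. -/
theorem weight_pairing {d : ℕ} {ρ a γ : ℝ} (hρ : 0 < ρ) (ha : 0 < a) (hγ : 0 < γ)
    {g : Ed d → ℝ≥0∞} {K : ℝ≥0∞} (h : Ann ρ g K) :
    ∫⁻ x, ENNReal.ofReal (a * (1 + ‖x‖) ^ (-γ - 1)) * g x
      ≤ ENNReal.ofReal (a * (ρ + ∑' j, wt γ j)) * K := by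
  have hs := wt_summable hγ
  refine (lintegral_le_cover hρ _).trans ?_
  have hsplit : ENNReal.ofReal (a * (ρ + ∑' j, wt γ j)) * K
      = (∑' j, ENNReal.ofReal (a * wt γ j) * K) + ENNReal.ofReal (a * ρ) * K := by
    rw [ENNReal.tsum_mul_right, ← ENNReal.ofReal_tsum_of_nonneg
      (fun j => mul_nonneg ha.le (wt_nonneg γ j)) (hs.mul_left a), tsum_mul_left, ← add_mul,
      ← ENNReal.ofReal_add (mul_nonneg ha.le (tsum_nonneg (wt_nonneg γ))) (by positivity)]
    ring_nf
  rw [hsplit]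
  gcongr ?_ + ?_
  · refine le_trans ?_ (ENNReal.tsum_comp_le_tsum_of_injective
      (f := (Subtype.val : {j : ℤ // jIdx ρ ≤ j} → ℤ)) Subtype.val_injective _)
    gcongr with j
    calc _ ≤ ∫⁻ x in shell d j, ENNReal.ofReal (a * (1 + (2:ℝ) ^ (j:ℤ)) ^ (-γ - 1)) * g x := by
            refine setLIntegral_mono' (measurableSet_shell d j) fun x hx => ?_
            gcongr ENNReal.ofReal (a * ?_) * _
            exact Real.rpow_le_rpow_of_nonpos (by positivity) (by linarith [hx.1]) (by linarith)
      _ = ENNReal.ofReal (a * (1 + (2:ℝ) ^ (j:ℤ)) ^ (-γ - 1)) * ∫⁻ x in shell d j, g x :=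
            lintegral_const_mul' _ _ ENNReal.ofReal_ne_top
      _ ≤ ENNReal.ofReal (a * (1 + (2:ℝ) ^ (j:ℤ)) ^ (-γ - 1)) *
            (ENNReal.ofReal ((2:ℝ) ^ ((j:ℤ) + 1)) * K) := by gcongr; exact h.1 j j.2
      _ = _ := by
            rw [← mul_assoc, ← ENNReal.ofReal_mul (by positivity), wt]
            ring_nf
  · calc _ ≤ ∫⁻ x in ball (0 : Ed d) ρ, ENNReal.ofReal a * g x := by
            refine lintegral_mono fun x => ?_
            gcongr
            refine mul_le_of_le_one_right ha.le ?_
            exact Real.rpow_le_one_of_one_le_of_nonpos (by simp) (by linarith)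
      _ = ENNReal.ofReal a * ∫⁻ x in ball (0 : Ed d) ρ, g x :=
            lintegral_const_mul' _ _ ENNReal.ofReal_ne_top
      _ ≤ ENNReal.ofReal a * (ENNReal.ofReal ρ * K) := by gcongr; exact h.2
      _ = _ := by rw [← mul_assoc, ← ENNReal.ofReal_mul ha.le]

lemma ball_le_nX2r {d : ℕ} {ρ R : ℝ} (hρ : 0 < ρ) (hR : ρ ≤ R) (g : Ed d → ℝ≥0∞) :
    ∫⁻ x in ball (0 : Ed d) R, g x ≤ ENNReal.ofReal R * nX2r ρ g := by
  have h : (ENNReal.ofReal R)⁻¹ * ∫⁻ x in ball (0 : Ed d) R, g x ≤ nX2r ρ g :=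
    le_iSup₂ (f := fun (R : ℝ) (_ : ρ ≤ R) =>
      (ENNReal.ofReal R)⁻¹ * ∫⁻ x in ball (0 : Ed d) R, g x) R hR
  rwa [← ENNReal.div_eq_inv_mul, ENNReal.div_le_iff' (by simpa using hρ.trans_le hR)
    ENNReal.ofReal_ne_top] at h

lemma ball_le_nS {d : ℕ} {ρ R : ℝ} (hρ : 0 < ρ) (hR : ρ ≤ R) (g : Ed d → ℝ≥0∞) :
    ∫⁻ x in ball (0 : Ed d) R, g x ≤ ENNReal.ofReal (R ^ 3) * nS ρ g := by
  have h : (ENNReal.ofReal (R ^ 3))⁻¹ * ∫⁻ x in ball (0 : Ed d) R, g x ≤ nS ρ g :=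
    le_iSup₂ (f := fun (R : ℝ) (_ : ρ ≤ R) =>
      (ENNReal.ofReal (R ^ 3))⁻¹ * ∫⁻ x in ball (0 : Ed d) R, g x) R hR
  have := hρ.trans_le hR
  rwa [← ENNReal.div_eq_inv_mul, ENNReal.div_le_iff' (by simpa using pow_pos this 3)
    ENNReal.ofReal_ne_top] at h

lemma shell_subset_ball {d : ℕ} (j : ℤ) : shell d j ⊆ ball (0 : Ed d) (2 * (2:ℝ) ^ (j + 1)) := by
  intro x hx
  have : (0:ℝ) < (2:ℝ) ^ (j + 1) := by positivity
  simp only [mem_ball_zero_iff]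
  linarith [hx.2]

lemma le_two_zpow {ρ : ℝ} (hρ : 0 < ρ) {j : ℤ} (hj : jIdx ρ ≤ j) : ρ ≤ 2 * (2:ℝ) ^ (j + 1) := by
  have h1 := (jIdx_spec hρ).2
  have h2 : (2:ℝ) ^ (jIdx ρ + 1) ≤ (2:ℝ) ^ (j + 1) := zpow_le_zpow_right₀ (by norm_num) (by omega)
  have : (0:ℝ) < (2:ℝ) ^ (j + 1) := by positivity
  linarith

theorem ann_nX2r {d : ℕ} {ρ : ℝ} (hρ : 0 < ρ) (g : Ed d → ℝ≥0∞) : Ann ρ g (2 * nX2r ρ g) := by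
  refine ⟨fun j hj => ?_, ?_⟩
  · calc _ ≤ ∫⁻ x in ball (0 : Ed d) (2 * (2:ℝ) ^ (j + 1)), g x :=
          lintegral_mono_set (shell_subset_ball j)
      _ ≤ _ := ball_le_nX2r hρ (le_two_zpow hρ hj) g
      _ = _ := by
          rw [ENNReal.ofReal_mul (by norm_num), ENNReal.ofReal_ofNat]; ring
  · refine (ball_le_nX2r hρ le_rfl g).trans ?_
    gcongr
    exact le_mul_of_one_le_left (zero_le) (by norm_num)

/-- Since `β = bet R ≤ min(1/R, 1/|x|)`, the factor `β²` turns the cubic growth allowed by `nS` into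
the linear growth required by `Ann`. -/
theorem ann_nS {d : ℕ} {ρ R : ℝ} (hρ : 0 < ρ) (hR : ρ ≤ R) (g : Ed d → ℝ≥0∞) :
    Ann ρ (fun x => ENNReal.ofReal (bet R x ^ 2) * g x) (32 * nS ρ g) := by
  have hR0 := hρ.trans_le hR
  refine ⟨fun j hj => ?_, ?_⟩
  · have hpos : (0:ℝ) < (2:ℝ) ^ j := by positivity
    calc _ ≤ ∫⁻ x in shell d j, ENNReal.ofReal (((2:ℝ) ^ j)⁻¹ ^ 2) * g x := by
          refine setLIntegral_mono' (measurableSet_shell d j) fun x hx => ?_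
          have := bet_norm_le hR0 x
          have h2 := bet_pos hR0 x
          gcongr
          rw [le_inv_comm₀ h2 hpos, ← one_div, le_div_iff₀ h2]
          nlinarith [hx.1]
      _ = ENNReal.ofReal (((2:ℝ) ^ j)⁻¹ ^ 2) * ∫⁻ x in shell d j, g x :=
          lintegral_const_mul' _ _ ENNReal.ofReal_ne_top
      _ ≤ ENNReal.ofReal (((2:ℝ) ^ j)⁻¹ ^ 2) *
          (ENNReal.ofReal ((2 * (2:ℝ) ^ (j + 1)) ^ 3) * nS ρ g) := by
          gcongr
          exact (lintegral_mono_set (shell_subset_ball j)).trans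
            (ball_le_nS hρ (le_two_zpow hρ hj) g)
      _ = _ := by
          rw [← mul_assoc, ← mul_assoc, ← ENNReal.ofReal_mul (by positivity),
            show (32 : ℝ≥0∞) = ENNReal.ofReal 32 by simp, ← ENNReal.ofReal_mul (by positivity),
            zpow_add₀ (by norm_num), zpow_one]
          congr 2
          field_simp
          ring
  · calc _ ≤ ∫⁻ x in ball (0 : Ed d) ρ, ENNReal.ofReal (ρ⁻¹ ^ 2) * g x := by
          refine lintegral_mono fun x => ?_
          have := bet_le hR0 x
          have h2 := bet_pos hR0 x
          simp only
          gcongr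
          rw [le_inv_comm₀ h2 hρ, ← one_div, le_div_iff₀ h2]
          nlinarith
      _ = ENNReal.ofReal (ρ⁻¹ ^ 2) * ∫⁻ x in ball (0 : Ed d) ρ, g x :=
          lintegral_const_mul' _ _ ENNReal.ofReal_ne_top
      _ ≤ ENNReal.ofReal (ρ⁻¹ ^ 2) * (ENNReal.ofReal (ρ ^ 3) * nS ρ g) := by
          gcongr
          exact ball_le_nS hρ le_rfl g
      _ = ENNReal.ofReal ρ * (1 * nS ρ g) := by
          rw [← mul_assoc, ← ENNReal.ofReal_mul (by positivity), one_mul]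
          congr 2
          field_simp
      _ ≤ _ := by gcongr; norm_num

/-! ### Measures on the unit sphere -/

/-- The cap of the unit sphere on which the coordinate `s * x i` is at least `1/d`. -/
def cap (d : ℕ) (i : Fin d) (s : ℝ) : Set (Ed d) := {x | ‖x‖ = 1 ∧ (1:ℝ) / d ≤ s * x i}

/-- Forgetting the coordinate `i` is antilipschitz on a cap: there `|x_i + y_i| ≥ 2/d`, so the
difference of the `i`-th coordinates is controlled by that of the others via `|x| = |y| = 1`. -/
lemma cap_anti {d : ℕ} (i : Fin d) {s : ℝ} (hs : s = 1 ∨ s = -1) :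
    AntilipschitzWith ((d:NNReal) ^ 3) (fun (x : cap d i s) (j : {j : Fin d // j ≠ i}) => x.1 j) := by
  refine AntilipschitzWith.of_le_mul_dist fun x y => ?_
  obtain ⟨x, hx, hxi⟩ := x
  obtain ⟨y, hy, hyi⟩ := y
  set D := dist (fun j : {j : Fin d // j ≠ i} => x j) (fun j : {j : Fin d // j ≠ i} => y j) with hD
  have hD0 : 0 ≤ D := dist_nonneg
  have hd1 : (1:ℝ) ≤ d := by exact_mod_cast Fin.pos i
  have hj : ∀ j, j ≠ i → |x j - y j| ≤ D := fun j hj => by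
    have := dist_le_pi_dist (fun j : {j : Fin d // j ≠ i} => x j) (fun j : {j : Fin d // j ≠ i} => y j) ⟨j, hj⟩
    simpa [Real.dist_eq] using this
  have hx1 : ∀ j, |x j| ≤ 1 := fun j => hx ▸ coord_le x j
  have hy1 : ∀ j, |y j| ≤ 1 := fun j => hy ▸ coord_le y j
  have sx := EuclideanSpace.real_norm_sq_eq x
  have sy := EuclideanSpace.real_norm_sq_eq y
  rw [hx] at sx
  rw [hy] at sy
  rw [← Finset.add_sum_erase _ _ (Finset.mem_univ i)] at sx sy
  have key : |x i ^ 2 - y i ^ 2| ≤ d * (2 * D) := by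
    have e : x i ^ 2 - y i ^ 2 = ∑ j ∈ Finset.univ.erase i, (y j ^ 2 - x j ^ 2) := by
      rw [Finset.sum_sub_distrib]; linarith
    rw [e]
    refine (Finset.abs_sum_le_sum_abs _ _).trans ?_
    have : ∀ j ∈ Finset.univ.erase i, |y j ^ 2 - x j ^ 2| ≤ 2 * D := fun j hjm => by
      have h1 := hj j (Finset.ne_of_mem_erase hjm)
      rw [sq_sub_sq, abs_mul, abs_sub_comm (y j)]
      have h2 : |y j + x j| ≤ 2 := (abs_add_le _ _).trans (by linarith [hx1 j, hy1 j])
      gcongr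
    refine (Finset.sum_le_card_nsmul _ _ _ this).trans ?_
    rw [nsmul_eq_mul]
    gcongr
    exact (Finset.card_le_univ _).trans (by simp)
  have hi : |x i - y i| ≤ d ^ 2 * D := by
    rw [sq_sub_sq, abs_mul] at key
    have h2 : 2 / (d:ℝ) ≤ |x i + y i| := by
      have : |x i + y i| = |s * (x i + y i)| := by
        rw [abs_mul]; rcases hs with rfl | rfl <;> simp
      rw [this]
      refine le_trans ?_ (le_abs_self _)
      have : 2 / (d:ℝ) = 1 / d + 1 / d := by ring
      rw [this]; linarith
    have h3 : 2 / (d:ℝ) * |x i - y i| ≤ d * (2 * D) := (by gcongr : _ ≤ _).trans key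
    rw [div_mul_eq_mul_div, div_le_iff₀ (by linarith)] at h3
    nlinarith
  have hall : ∀ j, |x j - y j| ≤ d ^ 2 * D := fun j => by
    by_cases h : j = i
    · rw [h]; exact hi
    · exact (hj j h).trans (le_mul_of_one_le_left hD0 (one_le_pow₀ hd1))
  have hdist : dist x y ≤ ∑ j, |x j - y j| := by
    rw [dist_eq_norm]
    have h0 : (0:ℝ) ≤ ∑ j, |x j - y j| := Finset.sum_nonneg fun _ _ => abs_nonneg _
    apply (pow_le_pow_iff_left₀ (norm_nonneg _) h0 two_ne_zero).1
    rw [EuclideanSpace.real_norm_sq_eq]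
    have := Finset.sum_sq_le_sq_sum_of_nonneg (s := Finset.univ) (f := fun j => |x j - y j|) (fun j _ => abs_nonneg _)
    simpa using this
  change dist x y ≤ _
  refine hdist.trans ((Finset.sum_le_card_nsmul _ _ _ fun j _ => hall j).trans ?_)
  simp
  exact le_of_eq (by ring)

/-- The `2d` caps cover the sphere, and each projects injectively, with Lipschitz inverse, into a
bounded set of `ℝ^{d-1}`. -/
lemma sphere_hausdorff_finite {d : ℕ} (hd : 1 ≤ d) :
    μH[(d:ℝ) - 1] (sphere (0 : Ed d) 1) < ⊤ := by
  have hd1 : (1:ℝ) ≤ d := by exact_mod_cast hd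
  have hcov : sphere (0 : Ed d) 1 ⊆ ⋃ i : Fin d, (cap d i 1 ∪ cap d i (-1)) := by
    intro x hx
    have hx1 : ‖x‖ = 1 := by simpa using hx
    by_contra hcon
    simp only [mem_iUnion, mem_union, cap, mem_ofPred_eq, hx1, true_and, not_exists, not_or, not_le] at hcon
    have sx := EuclideanSpace.real_norm_sq_eq x
    rw [hx1] at sx
    have hne : (Finset.univ : Finset (Fin d)).Nonempty := ⟨⟨0, hd⟩, Finset.mem_univ _⟩
    have : ∑ i, x i ^ 2 < ∑ _i : Fin d, (1:ℝ) / d := by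
      refine Finset.sum_lt_sum_of_nonempty hne fun i _ => ?_
      obtain ⟨h1, h2⟩ := hcon i
      have h4 : |x i| < 1 / d := abs_lt.2 ⟨by linarith, by linarith⟩
      have h3 := hx1 ▸ coord_le x i
      rw [← sq_abs, sq]
      calc |x i| * |x i| ≤ |x i| * 1 := by gcongr
        _ < _ := by rw [mul_one]; exact h4
    simp at this
    rw [mul_inv_cancel₀ (by positivity)] at this
    linarith
  have hcap : ∀ (i : Fin d) (s : ℝ), (s = 1 ∨ s = -1) → μH[(d:ℝ) - 1] (cap d i s) < ⊤ := by
    intro i s hs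
    have h0 : (0:ℝ) ≤ (d:ℝ) - 1 := by linarith
    have e1 : μH[(d:ℝ) - 1] (cap d i s) = μH[(d:ℝ) - 1] (univ : Set (cap d i s)) := by
      rw [← isometry_subtype_coe.hausdorffMeasure_image (Or.inl h0) univ]; simp
    rw [e1]
    refine ((cap_anti i hs).le_hausdorffMeasure_image h0 univ).trans_lt ?_
    refine ENNReal.mul_lt_top (ENNReal.rpow_lt_top_of_nonneg h0 ENNReal.coe_ne_top) ?_
    have hc : (d:ℝ) - 1 = Fintype.card {j : Fin d // j ≠ i} := by
      simp [Fintype.card_subtype_compl, Nat.cast_sub hd]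
    rw [hc, hausdorffMeasure_pi_real]
    refine lt_of_le_of_lt (measure_mono (t := closedBall 0 1) ?_) measure_closedBall_lt_top
    rintro _ ⟨x, -, rfl⟩
    rw [mem_closedBall_zero_iff, pi_norm_le_iff_of_nonneg zero_le_one]
    intro j
    exact x.2.1 ▸ coord_le x.1 j
  refine (measure_mono hcov).trans_lt ?_
  refine (measure_iUnion_le _).trans_lt ?_
  rw [tsum_fintype]
  refine ENNReal.sum_lt_top.2 fun i _ => ?_
  exact (measure_union_le _ _).trans_lt (ENNReal.add_lt_top.2 ⟨hcap i 1 (Or.inl rfl), hcap i _ (Or.inr rfl)⟩)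

/-- Any two points of the unit sphere are exchanged by a linear isometry. -/
lemma exists_isom {d : ℕ} (x y : sphere (0 : Ed d) 1) : ∃ T : Ed d ≃ₗᵢ[ℝ] Ed d, T x = y := by
  refine ⟨Submodule.reflection (Submodule.span ℝ {(x:Ed d) - y})ᗮ, Submodule.reflection_sub ?_⟩
  simp

lemma isom_image_ball {d : ℕ} {x y : sphere (0 : Ed d) 1} {T : Ed d ≃ₗᵢ[ℝ] Ed d} (hT : T x = y)
    (r : ℝ) : T '' (Subtype.val '' ball x r) = Subtype.val '' ball y r := by
  have key : ∀ z : sphere (0 : Ed d) 1, Subtype.val '' ball z r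
      = ball (z : Ed d) r ∩ sphere (0 : Ed d) 1 := by
    intro z; ext w
    constructor
    · rintro ⟨w, hw, rfl⟩; exact ⟨hw, w.2⟩
    · rintro ⟨h1, h2⟩; exact ⟨⟨w, h2⟩, h1, rfl⟩
  rw [key, key, image_inter T.injective, T.image_ball, T.image_sphere, hT, map_zero]

lemma hausdorff_ball_eq {d : ℕ} (hd : 1 ≤ d) (x y : sphere (0 : Ed d) 1) (r : ℝ) :
    μH[(d:ℝ) - 1] (ball x r) = μH[(d:ℝ) - 1] (ball y r) := by
  have h0 : (0:ℝ) ≤ (d:ℝ) - 1 := by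
    have : (1:ℝ) ≤ d := by exact_mod_cast hd
    linarith
  obtain ⟨T, hT⟩ := exists_isom x y
  rw [← isometry_subtype_coe.hausdorffMeasure_image (Or.inl h0),
    ← isometry_subtype_coe.hausdorffMeasure_image (Or.inl h0) (ball y r), ← isom_image_ball hT,
    T.isometry.hausdorffMeasure_image (Or.inl h0)]

open scoped Pointwise in
lemma toSphere_ball_eq {d : ℕ} (x y : sphere (0 : Ed d) 1) (r : ℝ) :
    (volume : Measure (Ed d)).toSphere (ball x r) = (volume : Measure (Ed d)).toSphere (ball y r) := by
  obtain ⟨T, hT⟩ := exists_isom x y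
  rw [Measure.toSphere_apply' _ measurableSet_ball, Measure.toSphere_apply' _ measurableSet_ball,
    ← isom_image_ball hT]
  congr 1
  have : Ioo (0:ℝ) 1 • (T '' (Subtype.val '' ball x r)) = T '' (Ioo (0:ℝ) 1 • (Subtype.val '' ball x r)) := by
    ext z
    simp only [Set.mem_smul, mem_image]
    constructor
    · rintro ⟨c, hc, _, ⟨w, hw, rfl⟩, rfl⟩
      exact ⟨c • w, ⟨c, hc, w, hw, rfl⟩, by simp⟩
    · rintro ⟨_, ⟨c, hc, w, hw, rfl⟩, rfl⟩
      exact ⟨c, hc, T w, ⟨w, hw, rfl⟩, by simp⟩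
  rw [this]
  have hp := (LinearIsometryEquiv.measurePreserving T).measure_preimage_emb
    T.toHomeomorph.measurableEmbedding (T '' (Ioo (0:ℝ) 1 • (Subtype.val '' ball x r)))
  rw [← hp, preimage_image_eq _ T.injective]

/-- Two finite measures on a compact metric space whose balls have masses independent of the centre
are proportional; only the inequality for continuous functions is recorded. -/
lemma proportional {X : Type*} [MetricSpace X] [CompactSpace X] [MeasurableSpace X] [BorelSpace X]
    [Nonempty X]
    (μ ν : Measure X) [IsFiniteMeasure μ] [IsFiniteMeasure ν] [ν.IsOpenPosMeasure]
    (hμ : ∀ x y r, μ (ball x r) = μ (ball y r)) (hν : ∀ x y r, ν (ball x r) = ν (ball y r))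
    {g : X → ℝ} (hg : Continuous g) (g0 : ∀ x, 0 ≤ g x) :
    ∫⁻ x, ENNReal.ofReal (g x) ∂μ ≤ μ univ / ν univ * ∫⁻ x, ENNReal.ofReal (g x) ∂ν := by
  classical
  obtain ⟨x₀⟩ := ‹Nonempty X›
  have hν0 : ν univ ≠ 0 := isOpen_univ.measure_ne_zero ν ⟨x₀, mem_univ _⟩
  have hνT : ν univ ≠ ⊤ := measure_ne_top _ _
  have hms : ∀ r : ℝ, MeasurableSet {z : X × X | dist z.1 z.2 < r} := fun r =>
    (isOpen_lt (by fun_prop) continuous_const).measurableSet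
  -- Fubini for the indicator of `dist x y < r`
  have fub : ∀ (r : ℝ) (h : X → ℝ≥0∞), Measurable h →
      ν (ball x₀ r) * ∫⁻ x, h x ∂μ = ∫⁻ y, ∫⁻ x in ball y r, h x ∂μ ∂ν := by
    intro r h hh
    have hmeas : Measurable fun z : X × X =>
        ({z : X × X | dist z.1 z.2 < r}.indicator (fun z => h z.1) z) :=
      (hh.comp measurable_fst).indicator (hms r)
    have hswap := lintegral_lintegral_swap (μ := μ) (ν := ν)
      (f := fun x y => {z : X × X | dist z.1 z.2 < r}.indicator (fun z => h z.1) (x, y))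
      hmeas.aemeasurable
    have hL : ∀ x, ∫⁻ y, {z : X × X | dist z.1 z.2 < r}.indicator (fun z => h z.1) (x, y) ∂ν
        = ν (ball x₀ r) * h x := by
      intro x
      have : (fun y => {z : X × X | dist z.1 z.2 < r}.indicator (fun z => h z.1) (x, y))
          = (ball x r).indicator (fun _ => h x) := by
        ext y
        simp only [indicator, mem_ofPred_eq, mem_ball, dist_comm x y]
      rw [this, lintegral_indicator measurableSet_ball, setLIntegral_const, hν x x₀, mul_comm]
    have hR : ∀ y, ∫⁻ x, {z : X × X | dist z.1 z.2 < r}.indicator (fun z => h z.1) (x, y) ∂μ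
        = ∫⁻ x in ball y r, h x ∂μ := by
      intro y
      have : (fun x => {z : X × X | dist z.1 z.2 < r}.indicator (fun z => h z.1) (x, y))
          = (ball y r).indicator h := by
        ext x
        simp only [indicator, mem_ofPred_eq, mem_ball]
      rw [this, lintegral_indicator measurableSet_ball]
    simp_rw [hL, hR] at hswap
    rw [lintegral_const_mul _ hh] at hswap
    exact hswap
  have hone : ∀ r : ℝ, ν (ball x₀ r) * μ univ = μ (ball x₀ r) * ν univ := by
    intro r
    have := fub r (fun _ => 1) measurable_const
    simpa [hμ _ x₀ r] using this
  have hgm : Measurable fun x => ENNReal.ofReal (g x) := hg.measurable.ennreal_ofReal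
  have main : ∀ δ : ℝ, 0 < δ → ∫⁻ x, ENNReal.ofReal (g x) ∂μ
      ≤ μ univ / ν univ * (∫⁻ x, ENNReal.ofReal (g x) ∂ν + ENNReal.ofReal δ * ν univ) := by
    intro δ hδ
    obtain ⟨r, hr, hrg⟩ := Metric.uniformContinuous_iff.1
      (CompactSpace.uniformContinuous_of_continuous hg) δ hδ
    have h1 := fub r _ hgm
    have hr0 : ν (ball x₀ r) ≠ 0 := isOpen_ball.measure_ne_zero ν ⟨x₀, mem_ball_self hr⟩
    have hrT : ν (ball x₀ r) ≠ ⊤ := measure_ne_top _ _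
    have h2 : ∫⁻ y, ∫⁻ x in ball y r, ENNReal.ofReal (g x) ∂μ ∂ν
        ≤ μ (ball x₀ r) * (∫⁻ x, ENNReal.ofReal (g x) ∂ν + ENNReal.ofReal δ * ν univ) := by
      calc _ ≤ ∫⁻ y, μ (ball x₀ r) * (ENNReal.ofReal (g y) + ENNReal.ofReal δ) ∂ν := by
            refine lintegral_mono fun y => ?_
            calc _ ≤ ∫⁻ x in ball y r, (ENNReal.ofReal (g y) + ENNReal.ofReal δ) ∂μ := by
                  refine setLIntegral_mono' measurableSet_ball fun x hx => ?_
                  rw [← ENNReal.ofReal_add (g0 y) hδ.le]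
                  apply ENNReal.ofReal_le_ofReal
                  have := hrg hx
                  rw [Real.dist_eq] at this
                  linarith [(abs_lt.1 this).2]
              _ = _ := by rw [setLIntegral_const, hμ y x₀ r, mul_comm]
        _ = _ := by
            rw [lintegral_const_mul _ (hgm.add_const _), lintegral_add_right _ measurable_const,
              lintegral_const]
    rw [← h1] at h2
    set I := ∫⁻ x, ENNReal.ofReal (g x) ∂μ
    set J := ∫⁻ x, ENNReal.ofReal (g x) ∂ν + ENNReal.ofReal δ * ν univ
    have h3 : ν (ball x₀ r) * (ν univ * I) ≤ ν (ball x₀ r) * (μ univ * J) := by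
      calc _ = ν univ * (ν (ball x₀ r) * I) := by ring
        _ ≤ ν univ * (μ (ball x₀ r) * J) := by gcongr
        _ = (μ (ball x₀ r) * ν univ) * J := by ring
        _ = _ := by rw [← hone r]; ring
    rw [ENNReal.mul_le_mul_iff_right hr0 hrT] at h3
    rw [ENNReal.div_eq_inv_mul, mul_assoc, ← ENNReal.div_eq_inv_mul, ENNReal.le_div_iff_mul_le (Or.inl hν0) (Or.inl hνT),
      mul_comm]
    exact h3
  have hc : μ univ / ν univ ≠ ⊤ := ENNReal.div_ne_top (measure_ne_top _ _) hν0
  have hlim : Filter.Tendsto (fun δ : ℝ => μ univ / ν univ *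
      (∫⁻ x, ENNReal.ofReal (g x) ∂ν + ENNReal.ofReal δ * ν univ)) (nhdsWithin 0 (Ioi 0))
      (nhds (μ univ / ν univ * (∫⁻ x, ENNReal.ofReal (g x) ∂ν + ENNReal.ofReal 0 * ν univ))) := by
    refine ENNReal.Tendsto.const_mul ?_ (Or.inr hc)
    refine Filter.Tendsto.const_add _ ?_
    refine ENNReal.Tendsto.mul_const ?_ (Or.inr hνT)
    exact (ENNReal.continuous_ofReal.tendsto 0).mono_left nhdsWithin_le_nhds
  have := ge_of_tendsto hlim (Filter.eventually_of_mem self_mem_nhdsWithin main)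
  simpa using this

/-! ### The trace inequality on spheres -/

/-- Polar coordinates on a ball. -/
lemma polar_ball {d : ℕ} (hd : 1 ≤ d) (R : ℝ) {φ : Ed d → ℝ≥0∞} (hφ : Measurable φ) :
    ∫⁻ ω : sphere (0 : Ed d) 1, (∫⁻ r in Ioo (0:ℝ) R, ENNReal.ofReal (r ^ (d - 1)) *
      φ (r • (ω : Ed d))) ∂(volume : Measure (Ed d)).toSphere = ∫⁻ x in ball (0 : Ed d) R, φ x := by
  have : Nontrivial (Ed d) := by
    have : Nonempty (Fin d) := ⟨⟨0, hd⟩⟩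
    infer_instance
  set ψ := (ball (0 : Ed d) R).indicator φ with hψ
  have hψm : Measurable ψ := hφ.indicator measurableSet_ball
  rw [← lintegral_indicator measurableSet_ball, ← hψ]
  have e1 : ∫⁻ x, ψ x = ∫⁻ x : ({0}ᶜ : Set (Ed d)), ψ x ∂((volume : Measure (Ed d)).comap Subtype.val) := by
    rw [lintegral_subtype_comap (measurableSet_singleton _).compl, restrict_compl_singleton]
  have e2 := ((volume : Measure (Ed d)).measurePreserving_homeomorphUnitSphereProd).lintegral_comp_emb
    (Homeomorph.measurableEmbedding _) (fun p => ψ (((homeomorphUnitSphereProd (Ed d)).symm p : _) : Ed d))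
  simp only [Homeomorph.symm_apply_apply] at e2
  rw [e1, e2, lintegral_prod _ ?_]
  · refine lintegral_congr fun ω => ?_
    have hm : Measurable fun r : ℝ => ψ (r • (ω : Ed d)) := hψm.comp (by fun_prop)
    rw [Measure.volumeIoiPow, lintegral_withDensity_eq_lintegral_mul _ (by fun_prop) (by
      exact hm.comp measurable_subtype_coe)]
    simp only [Pi.mul_apply, homeomorphUnitSphereProd_symm_apply_coe, finrank_euclideanSpace_fin]
    rw [lintegral_subtype_comap measurableSet_Ioi
      (fun r : ℝ => ENNReal.ofReal (r ^ (d - 1)) * ψ (r • (ω : Ed d)))]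
    have e3 : Ioo (0:ℝ) R = Iio R ∩ Ioi 0 := by ext; simp [and_comm]
    rw [e3, ← Measure.restrict_restrict measurableSet_Iio, ← lintegral_indicator measurableSet_Iio]
    refine setLIntegral_congr_fun measurableSet_Ioi fun r hr => ?_
    have hr' : 0 < r := hr
    by_cases h : r < R
    · simp [hψ, indicator, h, norm_smul, abs_of_pos hr']
    · simp [hψ, indicator, h, norm_smul, abs_of_pos hr']
  · refine Measurable.aemeasurable (hψm.comp (measurable_subtype_coe.comp ?_))
    exact (homeomorphUnitSphereProd (Ed d)).symm.measurable

/-- Real version of `gradSq`. -/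
def gs {d : ℕ} (u : Ed d → ℂ) (x : Ed d) : ℝ := ∑ i, ‖pd u i x‖ ^ 2

lemma gs_nonneg {d : ℕ} (u : Ed d → ℂ) (x : Ed d) : 0 ≤ gs u x := by unfold gs; positivity

lemma usq_eq {d : ℕ} (u : Ed d → ℂ) (x : Ed d) : usq u x = ENNReal.ofReal (‖u x‖ ^ 2) := by
  rw [usq, ENNReal.ofReal_pow (norm_nonneg _), ofReal_norm]; rfl

lemma gradSq_eq {d : ℕ} (u : Ed d → ℂ) (x : Ed d) : gradSq u x = ENNReal.ofReal (gs u x) := by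
  rw [gradSq, gs, ENNReal.ofReal_sum_of_nonneg (fun i _ => by positivity)]
  refine Finset.sum_congr rfl fun i _ => ?_
  rw [ENNReal.ofReal_pow (norm_nonneg _), ofReal_norm]; rfl

lemma pd_continuous {d : ℕ} {u : Ed d → ℂ} (hu : ContDiff ℝ 1 u) (i : Fin d) :
    Continuous (pd u i) := by
  have := hu.continuous_fderiv (by norm_num)
  unfold pd
  fun_prop

lemma gs_continuous {d : ℕ} {u : Ed d → ℂ} (hu : ContDiff ℝ 1 u) : Continuous (gs u) := by
  have := pd_continuous hu
  unfold gs
  fun_prop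

lemma fderiv_sq_le {d : ℕ} (u : Ed d → ℂ) (x v : Ed d) :
    ‖fderiv ℝ u x v‖ ^ 2 ≤ ‖v‖ ^ 2 * gs u x := by
  have e : fderiv ℝ u x v = ∑ i, v i • pd u i x := by
    conv_lhs => rw [← (EuclideanSpace.basisFun (Fin d) ℝ).sum_repr v]
    simp [pd]
  rw [e, EuclideanSpace.real_norm_sq_eq, gs]
  have h1 : ‖∑ i, v i • pd u i x‖ ≤ ∑ i, |v i| * ‖pd u i x‖ :=
    (norm_sum_le _ _).trans (le_of_eq (by simp))
  calc _ ≤ (∑ i, |v i| * ‖pd u i x‖) ^ 2 := by gcongr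
    _ ≤ _ := Finset.sum_mul_sq_le_sq_mul_sq _ _ _
    _ = _ := by simp

/-- The fundamental theorem of calculus for `r ↦ r^d |u(rω)|²` on `[0, R]`, with
`2 r |u||∂_r u| ≤ |u|² + r² |∇u|²`. -/
lemma radial_ftc {d : ℕ} (hd : 1 ≤ d) {u : Ed d → ℂ} (hu : ContDiff ℝ 1 u) {R : ℝ} (hR : 0 < R)
    {ω : Ed d} (hω : ‖ω‖ = 1) :
    ENNReal.ofReal (R ^ d * ‖u (R • ω)‖ ^ 2) ≤ ∫⁻ r in Ioo (0:ℝ) R, ENNReal.ofReal (r ^ (d - 1)) *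
      (ENNReal.ofReal (d + 1) * usq u (r • ω) + ENNReal.ofReal (R ^ 2) * gradSq u (r • ω)) := by
  set m : ℝ → ℝ := fun r => r ^ (d - 1) * ((d + 1) * ‖u (r • ω)‖ ^ 2 + R ^ 2 * gs u (r • ω)) with hm
  have cu := hu.continuous
  have cg := gs_continuous hu
  have cm : Continuous m := by rw [hm]; fun_prop
  have cf := hu.continuous_fderiv (by norm_num)
  set F' : ℝ → ℝ := fun r => (d * r ^ (d - 1)) * ‖u (r • ω)‖ ^ 2
    + r ^ d * (2 * inner ℝ (u (r • ω)) (fderiv ℝ u (r • ω) ω)) with hF'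
  have cF' : Continuous F' := by rw [hF']; fun_prop
  have hder : ∀ r : ℝ, HasDerivAt (fun r : ℝ => r ^ d * ‖u (r • ω)‖ ^ 2) (F' r) r := by
    intro r
    have h1 : HasDerivAt (fun r : ℝ => r • ω) ω r := by
      simpa using (hasDerivAt_id r).smul_const ω
    have h2 : HasDerivAt (fun r : ℝ => u (r • ω)) (fderiv ℝ u (r • ω) ω) r :=
      (hu.differentiable (by norm_num) _).hasFDerivAt.comp_hasDerivAt r h1
    exact (hasDerivAt_pow d r).mul h2.norm_sq
  have hftc := intervalIntegral.integral_eq_sub_of_hasDerivAt (a := 0) (b := R)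
    (fun r _ => hder r) (cF'.intervalIntegrable _ _)
  have hle : ∫ r in (0:ℝ)..R, F' r ≤ ∫ r in (0:ℝ)..R, m r := by
    refine intervalIntegral.integral_mono_on hR.le (cF'.intervalIntegrable _ _)
      (cm.intervalIntegrable _ _) fun r hr => ?_
    obtain ⟨r0, rR⟩ := hr
    have hcs := real_inner_le_norm (u (r • ω)) (fderiv ℝ u (r • ω) ω)
    have hgr := fderiv_sq_le u (r • ω) ω
    rw [hω, one_pow, one_mul] at hgr
    have hrd : r ^ d = r ^ (d - 1) * r := by rw [← pow_succ]; congr 1; omega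
    simp only [hF', hm]
    rw [hrd]
    set A := ‖u (r • ω)‖
    set B := ‖fderiv ℝ u (r • ω) ω‖
    have k : r * (2 * inner ℝ (u (r • ω)) (fderiv ℝ u (r • ω) ω)) ≤ A ^ 2 + R ^ 2 * gs u (r • ω) := by
      calc _ ≤ r * (2 * (A * B)) := by gcongr
        _ ≤ A ^ 2 + r ^ 2 * B ^ 2 := by nlinarith [sq_nonneg (A - r * B)]
        _ ≤ _ := by gcongr
    have := mul_le_mul_of_nonneg_left k (pow_nonneg r0 (d - 1))
    nlinarith
  have hd0 : d ≠ 0 := by omega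
  rw [zero_pow hd0, zero_mul, sub_zero] at hftc
  calc _ ≤ ENNReal.ofReal (∫ r in (0:ℝ)..R, m r) := ENNReal.ofReal_le_ofReal (hftc ▸ hle)
    _ = ∫⁻ r in Ioc 0 R, ENNReal.ofReal (m r) := by
      rw [intervalIntegral.integral_of_le hR.le, ofReal_integral_eq_lintegral_ofReal]
      · exact (cm.intervalIntegrable 0 R).1
      · refine (ae_restrict_iff' measurableSet_Ioc).2 (Filter.Eventually.of_forall fun r hr => ?_)
        have := gs_nonneg u (r • ω)
        have := hr.1
        simp only [hm, Pi.zero_apply]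
        positivity
    _ = ∫⁻ r in Ioo 0 R, ENNReal.ofReal (m r) := by rw [restrict_Ioo_eq_restrict_Ioc]
    _ = _ := by
      refine setLIntegral_congr_fun measurableSet_Ioo fun r hr => ?_
      have := gs_nonneg u (r • ω)
      have := hr.1
      simp only [hm]
      rw [usq_eq, gradSq_eq, ← ENNReal.ofReal_mul (by positivity), ← ENNReal.ofReal_mul (by positivity),
        ← ENNReal.ofReal_add (by positivity) (by positivity), ← ENNReal.ofReal_mul (by positivity)]

/-- Trace inequality on spheres. The Hausdorff measure of the unit sphere is proportional to
`volume.toSphere`, both being finite and rotation invariant, so `radial_ftc` can be integrated over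
the sphere in polar coordinates. -/
theorem sphere_trace {d : ℕ} (hd : 1 ≤ d) : ∃ Cs : ℝ, 0 ≤ Cs ∧ ∀ (u : Ed d → ℂ), ContDiff ℝ 1 u →
    ∀ R : ℝ, 0 < R → ENNReal.ofReal R * sphInt R (usq u) ≤ ENNReal.ofReal Cs *
      ∫⁻ x in ball (0 : Ed d) R,
        (ENNReal.ofReal (d + 1) * usq u x + ENNReal.ofReal (R ^ 2) * gradSq u x) := by
  have : Nonempty (Fin d) := ⟨⟨0, hd⟩⟩
  have h0 : (0:ℝ) ≤ (d:ℝ) - 1 := by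
    have : (1:ℝ) ≤ d := by exact_mod_cast hd
    linarith
  set μ : Measure (sphere (0 : Ed d) 1) := μH[(d:ℝ) - 1] with hμdef
  set ν := (volume : Measure (Ed d)).toSphere with hν
  have hfin : μ univ < ⊤ := by
    have := sphere_hausdorff_finite hd
    rw [hμdef, ← isometry_subtype_coe.hausdorffMeasure_image (Or.inl h0) univ]
    rwa [image_univ, Subtype.range_coe]
  have : IsFiniteMeasure μ := ⟨hfin⟩
  have : Nonempty (sphere (0 : Ed d) 1) := (NormedSpace.sphere_nonempty.2 zero_le_one).to_subtype
  have : CompactSpace (sphere (0 : Ed d) 1) := isCompact_iff_compactSpace.1 (isCompact_sphere _ _)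
  have hν0 : ν univ ≠ 0 := isOpen_univ.measure_ne_zero ν univ_nonempty
  have hcT : μ univ / ν univ ≠ ⊤ := ENNReal.div_ne_top hfin.ne hν0
  refine ⟨(μ univ / ν univ).toReal, ENNReal.toReal_nonneg, fun u hu R hR => ?_⟩
  rw [ENNReal.ofReal_toReal hcT]
  have hum : Measurable (usq u) := by
    have : usq u = fun x => ENNReal.ofReal (‖u x‖ ^ 2) := funext (usq_eq u)
    rw [this]; exact (hu.continuous.norm.pow 2).measurable.ennreal_ofReal
  have hgm : Measurable (gradSq u) := by
    have : gradSq u = fun x => ENNReal.ofReal (gs u x) := funext (gradSq_eq u)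
    rw [this]; exact (gs_continuous hu).measurable.ennreal_ofReal
  -- dilation of the unit sphere onto the sphere of radius `R`
  set e : sphere (0 : Ed d) 1 → Ed d := fun ω => R • (ω : Ed d) with he
  have hec : Continuous e := by rw [he]; fun_prop
  have heL : LipschitzWith (Real.toNNReal R) e := by
    refine LipschitzWith.of_dist_le_mul fun x y => ?_
    rw [he, dist_smul₀, Real.norm_of_nonneg hR.le, Real.coe_toNNReal _ hR.le]
    rfl
  have hdil : (μH[(d:ℝ) - 1]).restrict (sphere (0 : Ed d) R)
      ≤ ENNReal.ofReal (R ^ (d - 1)) • μ.map e := by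
    refine Measure.le_iff.2 fun A hA => ?_
    rw [Measure.restrict_apply hA, Measure.smul_apply, Measure.map_apply hec.measurable hA, smul_eq_mul]
    have hsub : A ∩ sphere (0 : Ed d) R ⊆ e '' (e ⁻¹' A) := by
      rintro x ⟨hxA, hxR⟩
      have hxR' : ‖x‖ = R := by simpa using hxR
      have hx : e ⟨R⁻¹ • x, by simp [norm_smul, hxR', abs_of_pos hR, hR.ne']⟩ = x := by
        simp [he, smul_smul, hR.ne']
      exact ⟨_, by rw [mem_preimage, hx]; exact hxA, hx⟩
    refine (measure_mono hsub).trans ((heL.hausdorffMeasure_image_le h0 _).trans (le_of_eq ?_))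
    congr 1
    have : (d:ℝ) - 1 = ((d - 1 : ℕ) : ℝ) := by rw [Nat.cast_sub hd]; simp
    rw [this, ENNReal.rpow_natCast, ENNReal.ofReal_pow hR.le]
    rfl
  have hcont : Continuous fun ω : sphere (0 : Ed d) 1 => ‖u (R • (ω : Ed d))‖ ^ 2 := by
    have := hu.continuous
    fun_prop
  have hprop := proportional μ ν (hausdorff_ball_eq hd) toSphere_ball_eq hcont (fun _ => by positivity)
  calc ENNReal.ofReal R * sphInt R (usq u)
      ≤ ENNReal.ofReal R * (ENNReal.ofReal (R ^ (d - 1)) * ∫⁻ ω, usq u (e ω) ∂μ) := by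
        gcongr
        unfold sphInt
        refine (lintegral_mono' hdil le_rfl).trans (le_of_eq ?_)
        rw [lintegral_smul_measure, lintegral_map hum hec.measurable]; rfl
    _ = ENNReal.ofReal (R ^ d) * ∫⁻ ω : sphere (0 : Ed d) 1, ENNReal.ofReal (‖u (R • (ω : Ed d))‖ ^ 2) ∂μ := by
        rw [← mul_assoc, ← ENNReal.ofReal_mul hR.le, ← pow_succ']
        simp_rw [usq_eq]
        congr 4
        omega
    _ ≤ ENNReal.ofReal (R ^ d) * (μ univ / ν univ *
          ∫⁻ ω : sphere (0 : Ed d) 1, ENNReal.ofReal (‖u (R • (ω : Ed d))‖ ^ 2) ∂ν) := by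
        gcongr
    _ = μ univ / ν univ *
          ∫⁻ ω : sphere (0 : Ed d) 1, ENNReal.ofReal (R ^ d * ‖u (R • (ω : Ed d))‖ ^ 2) ∂ν := by
        simp_rw [ENNReal.ofReal_mul (pow_nonneg hR.le d)]
        rw [lintegral_const_mul _ hcont.measurable.ennreal_ofReal]
        ring
    _ ≤ _ := by
        have hm : Measurable fun x => ENNReal.ofReal (d + 1) * usq u x
            + ENNReal.ofReal (R ^ 2) * gradSq u x := (hum.const_mul _).add (hgm.const_mul _)
        rw [← polar_ball hd R hm]
        gcongr with ω
        exact radial_ftc hd hu hR (by simp)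

/-! ### Weighted pairing and absorption -/

/-- The decaying weight `a (1+|x|)^{-γ-1}`. -/
def bw {d : ℕ} (a γ : ℝ) (x : Ed d) : ℝ := a * (1 + ‖x‖) ^ (-γ - 1)

lemma bw_continuous {d : ℕ} (a γ : ℝ) : Continuous (bw (d := d) a γ) := by
  unfold bw
  refine continuous_const.mul (Continuous.rpow_const (by fun_prop) fun x => Or.inl ?_)
  positivity

lemma bw_nonneg {d : ℕ} {a γ : ℝ} (ha : 0 < a) (x : Ed d) : 0 ≤ bw a γ x := by
  unfold bw; positivity

lemma bw_le {d : ℕ} {a γ : ℝ} (ha : 0 < a) (hγ : 0 < γ) (x : Ed d) : bw a γ x ≤ a :=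
  mul_le_of_le_one_right ha.le
    (Real.rpow_le_one_of_one_le_of_nonpos (by simp) (by linarith))

/-- The constant `a (ρ + Σ_j wt γ j)` of the weighted pairing. -/
def cw (a γ ρ : ℝ) : ℝ := a * (ρ + ∑' j, wt γ j)

lemma cw_nonneg {a γ ρ : ℝ} (ha : 0 < a) (hρ : 0 < ρ) : 0 ≤ cw a γ ρ :=
  mul_nonneg ha.le (add_nonneg hρ.le (tsum_nonneg (wt_nonneg γ)))

section
variable {d : ℕ} {ρ a γ : ℝ}

lemma weight_lintegral (hρ : 0 < ρ) (ha : 0 < a) (hγ : 0 < γ) {g : Ed d → ℝ} {K : ℝ}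
    (h : Ann ρ (fun x => ENNReal.ofReal (g x)) (ENNReal.ofReal K)) :
    ∫⁻ x, ENNReal.ofReal (bw a γ x * g x) ≤ ENNReal.ofReal (cw a γ ρ * K) := by
  have := weight_pairing hρ ha hγ h
  rw [ENNReal.ofReal_mul (cw_nonneg ha hρ)]
  refine le_trans (le_of_eq ?_) this
  refine lintegral_congr fun x => ?_
  rw [ENNReal.ofReal_mul (bw_nonneg ha x)]; rfl

lemma weight_integral (hρ : 0 < ρ) (ha : 0 < a) (hγ : 0 < γ) {g : Ed d → ℝ} {K : ℝ} (hK : 0 ≤ K)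
    (hg : Continuous g) (g0 : ∀ x, 0 ≤ g x)
    (h : Ann ρ (fun x => ENNReal.ofReal (g x)) (ENNReal.ofReal K)) :
    ∫ x, bw a γ x * g x ≤ cw a γ ρ * K := by
  rw [integral_eq_lintegral_of_nonneg_ae
    (Filter.Eventually.of_forall fun x => mul_nonneg (bw_nonneg ha x) (g0 x))
    ((bw_continuous a γ).mul hg).aestronglyMeasurable]
  exact ENNReal.toReal_le_of_le_ofReal (mul_nonneg (cw_nonneg ha hρ) hK)
    (weight_lintegral hρ ha hγ h)

/-- Pairing of `H ≤ F + b n` with `φ`: the `F` part is controlled by the dual norm, the `b n` part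
by the weighted pairing, the product `n φ` being split with a parameter `s`. -/
theorem H_bound (hρ : 0 < ρ) (ha : 0 < a) (hγ : 0 < γ) {F n φ H : Ed d → ℝ}
    (cF : Continuous F) (cn : Continuous n) (cφ : Continuous φ) (cH : Continuous H)
    (F0 : ∀ x, 0 ≤ F x) (φ0 : ∀ x, 0 ≤ φ x) (H0 : ∀ x, 0 ≤ H x)
    (hH : ∀ x, H x ≤ F x + bw a γ x * n x) {A Kn Kφ s : ℝ} (hA : 0 ≤ A) (hKn : 0 ≤ Kn)
    (hKφ : 0 ≤ Kφ) (hs : 0 < s)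
    (hFA : nXstarr ρ (fun x => ENNReal.ofReal (F x) ^ 2) ≤ ENNReal.ofReal A)
    (hn : Ann ρ (fun x => ENNReal.ofReal (n x ^ 2)) (ENNReal.ofReal Kn))
    (hφ : Ann ρ (fun x => ENNReal.ofReal (φ x ^ 2)) (ENNReal.ofReal Kφ)) :
    ∫ x, H x * φ x ≤ A * √Kφ + cw a γ ρ / 2 * (s * Kn + Kφ / s) := by
  have hc := cw_nonneg (γ := γ) ha hρ
  rw [integral_eq_lintegral_of_nonneg_ae
    (Filter.Eventually.of_forall fun x => mul_nonneg (H0 x) (φ0 x))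
    (cH.mul cφ).aestronglyMeasurable]
  refine ENNReal.toReal_le_of_le_ofReal (by positivity) ?_
  have hb := bw_continuous (d := d) a γ
  have pt : ∀ x, ENNReal.ofReal (H x * φ x) ≤ ENNReal.ofReal (F x) * ENNReal.ofReal (φ x)
      + (ENNReal.ofReal (s / 2) * ENNReal.ofReal (bw a γ x * n x ^ 2)
        + ENNReal.ofReal (1 / (2 * s)) * ENNReal.ofReal (bw a γ x * φ x ^ 2)) := by
    intro x
    have hbx := bw_nonneg (γ := γ) ha x
    have h1 := F0 x
    have h2 := φ0 x
    rw [← ENNReal.ofReal_mul h1, ← ENNReal.ofReal_mul (by positivity),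
      ← ENNReal.ofReal_mul (by positivity), ← ENNReal.ofReal_add (by positivity) (by positivity),
      ← ENNReal.ofReal_add (by positivity) (by positivity)]
    apply ENNReal.ofReal_le_ofReal
    have h3 : n x * φ x ≤ s / 2 * n x ^ 2 + 1 / (2 * s) * φ x ^ 2 := by
      have : s / 2 * n x ^ 2 + 1 / (2 * s) * φ x ^ 2 - n x * φ x = (s * n x - φ x) ^ 2 / (2 * s) := by
        field_simp; ring
      have h4 : 0 ≤ (s * n x - φ x) ^ 2 / (2 * s) := by positivity
      linarith
    calc H x * φ x ≤ (F x + bw a γ x * n x) * φ x := by gcongr; exact hH x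
      _ = F x * φ x + bw a γ x * (n x * φ x) := by ring
      _ ≤ F x * φ x + bw a γ x * (s / 2 * n x ^ 2 + 1 / (2 * s) * φ x ^ 2) := by gcongr
      _ = _ := by ring
  have m1 : Measurable fun x => ENNReal.ofReal (F x) * ENNReal.ofReal (φ x) :=
    cF.measurable.ennreal_ofReal.mul cφ.measurable.ennreal_ofReal
  have m2 : Measurable fun x => ENNReal.ofReal (bw a γ x * n x ^ 2) :=
    (hb.mul (cn.pow 2)).measurable.ennreal_ofReal
  have m3 : Measurable fun x => ENNReal.ofReal (bw a γ x * φ x ^ 2) :=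
    (hb.mul (cφ.pow 2)).measurable.ennreal_ofReal
  refine (lintegral_mono pt).trans ?_
  rw [lintegral_add_left m1, lintegral_add_left (m2.const_mul _), lintegral_const_mul _ m2,
    lintegral_const_mul _ m3]
  have hφ' : Ann ρ (fun x => ENNReal.ofReal (φ x) ^ 2) (ENNReal.ofReal Kφ) := by
    simpa only [ENNReal.ofReal_pow (φ0 _)] using hφ
  have B1 : ∫⁻ x, ENNReal.ofReal (F x) * ENNReal.ofReal (φ x) ≤ ENNReal.ofReal (A * √Kφ) := by
    refine (pairing hρ cF.measurable.ennreal_ofReal cφ.measurable.ennreal_ofReal hφ').trans ?_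
    rw [ENNReal.ofReal_mul hA, Real.sqrt_eq_rpow, ENNReal.ofReal_rpow_of_nonneg hKφ (by norm_num)]
    gcongr
  have B2 := weight_lintegral hρ ha hγ hn
  have B3 := weight_lintegral hρ ha hγ hφ
  calc _ ≤ ENNReal.ofReal (A * √Kφ) + (ENNReal.ofReal (s / 2) * ENNReal.ofReal (cw a γ ρ * Kn)
        + ENNReal.ofReal (1 / (2 * s)) * ENNReal.ofReal (cw a γ ρ * Kφ)) := by gcongr
    _ = _ := by
      rw [← ENNReal.ofReal_mul (by positivity), ← ENNReal.ofReal_mul (by positivity),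
        ← ENNReal.ofReal_add (by positivity) (by positivity),
        ← ENNReal.ofReal_add (by positivity) (by positivity)]
      congr 1
      field_simp

lemma extract {W φ : Ed d → ℝ} {s : Set (Ed d)} (hs : MeasurableSet s) {k T : ℝ} (hk : 0 ≤ k)
    (hW : Integrable W) (W0 : ∀ x, 0 ≤ W x) (hT : ∫ x, W x ≤ T) (h : ∀ x ∈ s, φ x ≤ k * W x) :
    ∫⁻ x in s, ENNReal.ofReal (φ x) ≤ ENNReal.ofReal (k * T) := by
  calc _ ≤ ∫⁻ x in s, ENNReal.ofReal (k * W x) :=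
        setLIntegral_mono' hs fun x hx => ENNReal.ofReal_le_ofReal (h x hx)
    _ ≤ ∫⁻ x, ENNReal.ofReal (k * W x) := setLIntegral_le_lintegral _ _
    _ = ENNReal.ofReal (∫ x, k * W x) :=
        (ofReal_integral_eq_lintegral_ofReal (hW.const_mul k)
          (Filter.Eventually.of_forall fun x => mul_nonneg hk (W0 x))).symm
    _ ≤ _ := by
        rw [integral_const_mul]
        exact ENNReal.ofReal_le_ofReal (by gcongr)

end

/-- The absorption argument. Here `G` and `U` stand for the squared `X` norms of `∇u` and `u`, `S` for
the cubic norm of `u`, `K₀` for `∫ |h||u|`, `T` for the right-hand side of the Morawetz inequality,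
`A` for the dual norm of `f` and `c` for the size of the potentials. All of `G`, `τU`, `S`, `eU` are
bounded by `T` and `K₀`, while `T` and `K₀` are bounded by these norms with `A` or the small factor
`c/s`, `s = √τ`, in front; this closes up because `2Mc ≤ s`. -/
lemma final_algebra {G U S A c κ τ e a T K₀ s t M : ℝ} (G0 : 0 ≤ G) (U0 : 0 ≤ U) (S0 : 0 ≤ S)
    (A0 : 0 ≤ A) (c0 : 0 ≤ c) (κ0 : 0 ≤ κ) (hτ : 1 ≤ τ) (a0 : 0 ≤ a) (haτ : a ≤ τ) (e0 : 0 ≤ e)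
    (s0 : 0 < s) (hs : s ^ 2 = τ) (t0 : 0 < t) (ht : t ^ 2 = τ + a + e)
    (hK : K₀ ≤ A * √(2 * U) + c / 2 * (1 * (2 * U) + 2 * U / 1))
    (hT : T ≤ 1/2 * (c * (2 * U)) + (A * √(2 * G) + c / 2 * (s * (2 * U) + 2 * G / s))
      + κ * (A * √(32 * S) + c / 2 * (s * (2 * U) + 32 * S / s)) + t * K₀)
    (hG : G ≤ 6 * T) (hU : τ * U ≤ 12 * T) (hS : S ≤ 4 * T) (hE : e * U ≤ S + √e * K₀)
    (hM : M = 27 * (6 + 17 * κ)) (hMc : 2 * M * c ≤ s) : T ≤ 4 * M ^ 2 * A ^ 2 := by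
  set X := G + τ * U + e * U + S with hX
  have hτU : 0 ≤ τ * U := by positivity
  have heU : 0 ≤ e * U := by positivity
  have X0 : 0 ≤ X := by positivity
  set r := √X with hr
  have r0 : 0 ≤ r := Real.sqrt_nonneg _
  have hrX : r ^ 2 = X := Real.sq_sqrt X0
  set y := c / s with hy
  have y0 : 0 ≤ y := by positivity
  have hcy : c = y * s := by rw [hy]; field_simp
  have hs1 : 1 ≤ s := by
    apply le_of_sq_le_sq _ s0.le
    rw [hs, one_pow]; exact hτ
  have hst : s ≤ t := by
    apply le_of_sq_le_sq _ t0.le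
    rw [hs, ht]; linarith
  have M0 : 0 < M := by rw [hM]; positivity
  have hMy : 2 * M * y ≤ 1 := by
    rw [hcy] at hMc
    have : (2 * M * y) * s ≤ 1 * s := by linarith
    exact le_of_mul_le_mul_right this s0
  have sq1 : ∀ k Q : ℝ, 0 ≤ k → Q ≤ k ^ 2 * X → √Q ≤ k * r := fun k Q hk hQ => by
    rw [Real.sqrt_le_left (by positivity), mul_pow, hrX]; exact hQ
  have q1 : √(2 * G) ≤ 2 * r := sq1 2 _ (by norm_num) (by linarith)
  have q2 : √(32 * S) ≤ 6 * r := sq1 6 _ (by norm_num) (by linarith)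
  have ht2 : t ^ 2 * U ≤ 2 * X := by
    have := mul_le_mul_of_nonneg_right haτ U0
    have h2 : t ^ 2 * U = τ * U + a * U + e * U := by rw [ht]; ring
    linarith
  have q3 : t * √(2 * U) ≤ 2 * r := by
    have : t * √(2 * U) = √(t ^ 2 * (2 * U)) := by
      rw [Real.sqrt_mul (sq_nonneg t), Real.sqrt_sq t0.le]
    rw [this]
    exact sq1 2 _ (by norm_num) (by linarith)
  have hsU : s * s * U ≤ X := by rw [← sq, hs]; linarith
  have hstU : s * t * U ≤ 2 * X := by
    refine le_trans ?_ ht2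
    rw [sq]; gcongr
  have hGs : c * (G / s) = y * G := by rw [hy]; field_simp
  have hSs : c * (S / s) = y * S := by rw [hy]; field_simp
  have tK : t * K₀ ≤ 2 * (A * r) + 4 * (y * X) := by
    calc t * K₀ ≤ t * (A * √(2 * U) + c / 2 * (1 * (2 * U) + 2 * U / 1)) := by gcongr
      _ = A * (t * √(2 * U)) + 2 * y * (s * t * U) := by rw [hcy]; ring
      _ ≤ A * (2 * r) + 2 * y * (2 * X) := by gcongr
      _ = _ := by ring
  have eK : √e * K₀ ≤ 2 * (A * r) + 4 * (y * X) := by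
    have het : √e ≤ t := by
      rw [Real.sqrt_le_left t0.le, ht]; linarith
    rcases le_total 0 K₀ with h | h
    · exact le_trans (by gcongr) tK
    · exact (mul_nonpos_of_nonneg_of_nonpos (Real.sqrt_nonneg _) h).trans (by positivity)
  have a1 : 1/2 * (c * (2 * U)) ≤ y * X := by
    calc _ = y * (1 * s * U) := by rw [hcy]; ring
      _ ≤ y * (s * s * U) := by gcongr
      _ ≤ _ := by gcongr
  have a2 : A * √(2 * G) + c / 2 * (s * (2 * U) + 2 * G / s) ≤ 2 * (A * r) + y * X := by
    have : c / 2 * (s * (2 * U) + 2 * G / s) = y * (s * s * U + G) := by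
      have : c / 2 * (s * (2 * U) + 2 * G / s) = c * s * U + c * (G / s) := by ring
      rw [this, hGs, hcy]; ring
    rw [this]
    have h2 : s * s * U + G ≤ X := by rw [← sq, hs]; linarith
    have h3 : y * (s * s * U + G) ≤ y * X := by gcongr
    have h4 : A * √(2 * G) ≤ A * (2 * r) := by gcongr
    linarith
  have a3 : A * √(32 * S) + c / 2 * (s * (2 * U) + 32 * S / s) ≤ 6 * (A * r) + 16 * (y * X) := by
    have : c / 2 * (s * (2 * U) + 32 * S / s) = y * (s * s * U + 16 * S) := by
      have : c / 2 * (s * (2 * U) + 32 * S / s) = c * s * U + 16 * (c * (S / s)) := by ring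
      rw [this, hSs, hcy]; ring
    rw [this]
    have h2 : s * s * U + 16 * S ≤ 16 * X := by rw [← sq, hs]; linarith
    have h3 : y * (s * s * U + 16 * S) ≤ y * (16 * X) := by gcongr
    have h4 : A * √(32 * S) ≤ A * (6 * r) := by gcongr
    linarith
  have Ar0 : 0 ≤ A * r := by positivity
  have yX0 : 0 ≤ y * X := by positivity
  set N := 6 + 17 * κ with hN
  have N0 : 0 < N := by positivity
  have hT' : T ≤ N * (A * r + y * X) := by
    have := mul_le_mul_of_nonneg_left a3 κ0
    have h1 : 0 ≤ κ * (A * r) := by positivity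
    have h2 : 0 ≤ κ * (y * X) := by positivity
    have h3 : N * (A * r + y * X) = 6 * (A * r) + 6 * (y * X) + 17 * (κ * (A * r)) + 17 * (κ * (y * X)) := by
      rw [hN]; ring
    rw [h3]
    linarith
  have hX' : X ≤ M * (A * r + y * X) := by
    have h1 : 2 * (A * r) + 4 * (y * X) ≤ N * (A * r + y * X) := by
      have h1 : 0 ≤ κ * (A * r + y * X) := by positivity
      have h2 : N * (A * r + y * X) = 6 * (A * r) + 6 * (y * X) + 17 * (κ * (A * r + y * X)) := by
        rw [hN]; ring
      linarith
    have h2 : M * (A * r + y * X) = 27 * (N * (A * r + y * X)) := by rw [hM]; ring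
    linarith
  have hr2 : r ≤ 2 * M * A := by
    have h1 : (2 * M * y) * X ≤ 1 * X := by gcongr
    have h2 : r ^ 2 ≤ 2 * M * A * r := by rw [hrX]; linarith
    rcases eq_or_lt_of_le r0 with h | h
    · rw [← h]; positivity
    · rw [sq] at h2
      exact le_of_mul_le_mul_right h2 h
  have hNM : N ≤ M := by rw [hM]; linarith
  have h1 : y * X ≤ A * r := by
    have h3 : X ≤ 2 * M * A * r := by rw [← hrX, sq]; gcongr
    calc y * X ≤ y * (2 * M * A * r) := by gcongr
      _ = (2 * M * y) * (A * r) := by ring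
      _ ≤ 1 * (A * r) := by gcongr
      _ = _ := one_mul _
  calc T ≤ N * (A * r + y * X) := hT'
    _ ≤ M * (A * r + A * r) := by gcongr
    _ ≤ M * (A * (2 * M * A) + A * (2 * M * A)) := by gcongr
    _ = _ := by ring

/-! ### The estimate for real and imaginary parts -/

lemma nX2r_le {d : ℕ} {ρ K : ℝ} (hρ : 0 < ρ) {g : Ed d → ℝ≥0∞}
    (h : ∀ R, ρ ≤ R → ∫⁻ x in ball (0 : Ed d) R, g x ≤ ENNReal.ofReal (R * K)) :
    nX2r ρ g ≤ ENNReal.ofReal K := by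
  refine iSup₂_le fun R hR => ?_
  have hR0 := hρ.trans_le hR
  rw [mul_comm, ← div_eq_mul_inv]
  refine ENNReal.div_le_of_le_mul' ?_
  rw [← ENNReal.ofReal_mul hR0.le]
  exact h R hR

lemma nS_le {d : ℕ} {ρ K : ℝ} (hρ : 0 < ρ) {g : Ed d → ℝ≥0∞}
    (h : ∀ R, ρ ≤ R → ∫⁻ x in ball (0 : Ed d) R, g x ≤ ENNReal.ofReal (R ^ 3 * K)) :
    nS ρ g ≤ ENNReal.ofReal K := by
  refine iSup₂_le fun R hR => ?_
  have hR0 := hρ.trans_le hR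
  rw [mul_comm, ← div_eq_mul_inv]
  refine ENNReal.div_le_of_le_mul' ?_
  rw [← ENNReal.ofReal_mul (by positivity)]
  exact h R hR

lemma nX2r_ne_top {d : ℕ} {ρ : ℝ} (hρ : 0 < ρ) {g : Ed d → ℝ≥0∞} (hg : ∫⁻ x, g x ≠ ⊤) :
    nX2r ρ g ≠ ⊤ := by
  refine ((nX2r_le (K := (∫⁻ x, g x).toReal / ρ) hρ fun R hR => ?_).trans_lt
    ENNReal.ofReal_lt_top).ne
  refine (setLIntegral_le_lintegral _ _).trans ?_
  rw [← ENNReal.ofReal_toReal hg, ENNReal.toReal_ofReal ENNReal.toReal_nonneg]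
  apply ENNReal.ofReal_le_ofReal
  rw [mul_div_assoc', le_div_iff₀ hρ, mul_comm]
  gcongr

lemma nS_ne_top {d : ℕ} {ρ : ℝ} (hρ : 0 < ρ) {g : Ed d → ℝ≥0∞} (hg : ∫⁻ x, g x ≠ ⊤) :
    nS ρ g ≠ ⊤ := by
  refine ((nS_le (K := (∫⁻ x, g x).toReal / ρ ^ 3) hρ fun R hR => ?_).trans_lt
    ENNReal.ofReal_lt_top).ne
  refine (setLIntegral_le_lintegral _ _).trans ?_
  rw [← ENNReal.ofReal_toReal hg, ENNReal.toReal_ofReal ENNReal.toReal_nonneg]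
  apply ENNReal.ofReal_le_ofReal
  rw [mul_div_assoc', le_div_iff₀ (by positivity), mul_comm]
  gcongr

lemma pow_lower {y : ℝ} (y0 : 0 ≤ y) (h : 1 / 2 ≤ y ^ 2) : 1 / 3 ≤ y ^ 3 ∧ 1 / 6 ≤ y ^ 5 := by
  have h1 : (7:ℝ)/10 ≤ y := by
    apply le_of_sq_le_sq _ y0
    norm_num at h ⊢; linarith
  have h3 : 7 / 10 * (1 / 2) ≤ y * y ^ 2 := by gcongr
  have h3' : y * y ^ 2 = y ^ 3 := by ring
  have h5 : 7 / 10 * (1 / 2) * (1 / 2) ≤ (y * y ^ 2) * y ^ 2 := by gcongr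
  have h5' : (y * y ^ 2) * y ^ 2 = y ^ 5 := by ring
  constructor <;> linarith

/-- Lower bounds for the Morawetz weight inside the ball of radius `R` (`β² (R² + r²) = 1`). -/
lemma W_inside {R r β z τ κ D g2 n2 : ℝ} (hR : 0 < R) (hr : r ^ 2 ≤ R ^ 2) (hβ : 0 < β)
    (hβ2 : β ^ 2 * (R ^ 2 + r ^ 2) = 1) (τ0 : 0 ≤ τ) (hz : τ / 2 ≤ z) (hκ : 1 ≤ κ) (hD : 3 ≤ D)
    (g0 : 0 ≤ g2) (n0 : 0 ≤ n2) :
    let W := 1/2 * R ^ 2 * β ^ 3 * (g2 + z * n2)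
      + κ / 2 * (D * R ^ 2 + (D - 3) * r ^ 2) * β ^ 5 * n2
    g2 ≤ 6 * R * W ∧ τ * n2 ≤ 12 * R * W ∧ n2 ≤ 4 * R ^ 3 * W := by
  intro W
  have hD3 : 0 ≤ D - 3 := by linarith
  have z0 : 0 ≤ z := by linarith
  have hy : 1 / 2 ≤ (β * R) ^ 2 := by
    have : β ^ 2 * r ^ 2 ≤ β ^ 2 * R ^ 2 := by gcongr
    rw [mul_pow]; linarith
  obtain ⟨h3, h5⟩ := pow_lower (by positivity) hy
  have hzn : τ / 2 * n2 ≤ z * n2 := by gcongr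
  have hzn0 : 0 ≤ τ / 2 * n2 := by positivity
  have A1 : 1 / 6 * (g2 + τ / 2 * n2) ≤ R * W := by
    have e : R * W = 1 / 2 * (β * R) ^ 3 * (g2 + z * n2)
        + R * (κ / 2 * (D * R ^ 2 + (D - 3) * r ^ 2) * β ^ 5 * n2) := by ring
    have e1 : 0 ≤ R * (κ / 2 * (D * R ^ 2 + (D - 3) * r ^ 2) * β ^ 5 * n2) := by positivity
    have e2 : 1 / 2 * (1 / 3) * (g2 + τ / 2 * n2) ≤ 1 / 2 * (β * R) ^ 3 * (g2 + z * n2) := by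
      gcongr
    linarith
  refine ⟨by linarith, by linarith, ?_⟩
  have e : R ^ 3 * W = 1 / 2 * R ^ 5 * β ^ 3 * (g2 + z * n2)
      + R ^ 3 * (κ / 2 * ((D - 3) * r ^ 2) * β ^ 5 * n2) + 1 / 2 * (κ * D) * (β * R) ^ 5 * n2 := by
    ring
  have e1 : 0 ≤ 1 / 2 * R ^ 5 * β ^ 3 * (g2 + z * n2) := by positivity
  have e2 : 0 ≤ R ^ 3 * (κ / 2 * ((D - 3) * r ^ 2) * β ^ 5 * n2) := by positivity
  have e3 : 1 / 2 * (1 * 3) * (1 / 6) * n2 ≤ 1 / 2 * (κ * D) * (β * R) ^ 5 * n2 := by gcongr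
  linarith

/-- Lower bound for the Morawetz weight outside the ball of radius `R`. -/
lemma W_outside {R r β z κ D g2 n2 : ℝ} (hR : 0 < R) (hr : R < r) (hβ : 0 < β)
    (hβ2 : β ^ 2 * (R ^ 2 + r ^ 2) = 1) (z0 : 0 ≤ z) (hκ : 1 ≤ κ) (hD : 3 ≤ D)
    (g0 : 0 ≤ g2) (n0 : 0 ≤ n2) :
    (D - 3) * n2 / r ^ 3 ≤ 12 * (1/2 * R ^ 2 * β ^ 3 * (g2 + z * n2)
      + κ / 2 * (D * R ^ 2 + (D - 3) * r ^ 2) * β ^ 5 * n2) := by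
  have hD3 : 0 ≤ D - 3 := by linarith
  have r0 := hR.trans hr
  have hy : 1 / 2 ≤ (β * r) ^ 2 := by
    have : β ^ 2 * R ^ 2 ≤ β ^ 2 * r ^ 2 := by gcongr
    rw [mul_pow]; linarith
  obtain ⟨h3, h5⟩ := pow_lower (by positivity) hy
  rw [div_le_iff₀ (by positivity)]
  have e : 12 * (1/2 * R ^ 2 * β ^ 3 * (g2 + z * n2)
      + κ / 2 * (D * R ^ 2 + (D - 3) * r ^ 2) * β ^ 5 * n2) * r ^ 3
      = 12 * (1/2 * R ^ 2 * β ^ 3 * (g2 + z * n2) + κ / 2 * (D * R ^ 2) * β ^ 5 * n2) * r ^ 3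
        + 6 * κ * (β * r) ^ 5 * ((D - 3) * n2) := by ring
  have e1 : 0 ≤ 12 * (1/2 * R ^ 2 * β ^ 3 * (g2 + z * n2)
      + κ / 2 * (D * R ^ 2) * β ^ 5 * n2) * r ^ 3 := by positivity
  have e2 : 6 * 1 * (1 / 6) * ((D - 3) * n2) ≤ 6 * κ * (β * r) ^ 5 * ((D - 3) * n2) := by gcongr
  rw [e]
  linarith

section
variable {d : ℕ} {p q Z n g H F : Ed d → ℝ} {e κ ρ a γ τ A M : ℝ}

set_option maxHeartbeats 2000000 in
/-- The resolvent estimate in terms of the real and imaginary parts `p`, `q` of the solution, its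
modulus `n`, the length `g` of its gradient and the modulus `H` of the right-hand side obtained by
moving the short range potential to the right. -/
theorem core (hd : 3 ≤ d) (hκ : κ = ((d:ℝ) - 1) / 2) (hρ : 0 < ρ) (ha : 0 < a) (hγ : 0 < γ)
    (hτ : 1 ≤ τ) (haτ : 2 * a ≤ τ) (he : e ≠ 0) (hA : 0 ≤ A)
    (hM : M = 27 * (6 + 17 * κ)) (hMc : 2 * M * cw a γ ρ ≤ √τ)
    (hp : ContDiff ℝ 2 p) (hq : ContDiff ℝ 2 q) (hZ : ContDiff ℝ 1 Z)
    (hZb : ∀ x, |Z x + τ| ≤ a) (hZe : ∀ x, eul Z x ≤ ‖x‖ * bw a γ x)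
    (cn : Continuous n) (cg : Continuous g) (cH : Continuous H) (cF : Continuous F)
    (n0 : ∀ x, 0 ≤ n x) (g0 : ∀ x, 0 ≤ g x) (H0 : ∀ x, 0 ≤ H x) (F0 : ∀ x, 0 ≤ F x)
    (hn : ∀ x, n x ^ 2 = p x ^ 2 + q x ^ 2) (hg : ∀ x, g x ^ 2 = gsq p x + gsq q x)
    (hH : ∀ x, H x ^ 2 = (- lapR p x + Z x * p x - e * q x) ^ 2
      + (- lapR q x + Z x * q x + e * p x) ^ 2)
    (in2 : Integrable fun x => n x ^ 2) (ig2 : Integrable fun x => g x ^ 2)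
    (iH2 : Integrable fun x => H x ^ 2)
    (hHF : ∀ x, H x ≤ F x + bw a γ x * n x)
    (hFA : nXstarr ρ (fun x => ENNReal.ofReal (F x) ^ 2) ≤ ENNReal.ofReal A) :
    ∃ T, 0 ≤ T ∧ T ≤ 4 * M ^ 2 * A ^ 2 ∧
      nX2r ρ (fun x => ENNReal.ofReal (g x ^ 2)) ≤ ENNReal.ofReal (6 * T) ∧
      ENNReal.ofReal τ * nX2r ρ (fun x => ENNReal.ofReal (n x ^ 2)) ≤ ENNReal.ofReal (12 * T) ∧
      nS ρ (fun x => ENNReal.ofReal (n x ^ 2)) ≤ ENNReal.ofReal (4 * T) ∧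
      ∫⁻ x in {x : Ed d | ρ < ‖x‖}, ENNReal.ofReal (((d:ℝ) - 3) * n x ^ 2 / ‖x‖ ^ 3)
        ≤ ENNReal.ofReal (12 * T) := by
  have hd' : (3:ℝ) ≤ d := by exact_mod_cast hd
  have hκ1 : 1 ≤ κ := by rw [hκ]; linarith
  have τ0 : 0 < τ := by linarith
  have e0 : 0 < |e| := abs_pos.2 he
  have s0 : 0 < √τ := Real.sqrt_pos.2 τ0
  set c := cw a γ ρ with hc
  have c0 : 0 ≤ c := cw_nonneg ha hρ
  set t := √(τ + a + |e|) with ht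
  have t0 : 0 < t := Real.sqrt_pos.2 (by positivity)
  have ht2 : t ^ 2 = τ + a + |e| := Real.sq_sqrt (by positivity)
  have cgp : Continuous (gsq p) := by
    unfold gsq
    exact continuous_finsetSum _ fun j _ => (dR_continuous (hp.of_le (by norm_num)) j).pow 2
  have cgq : Continuous (gsq q) := by
    unfold gsq
    exact continuous_finsetSum _ fun j _ => (dR_continuous (hq.of_le (by norm_num)) j).pow 2
  have igp : Integrable (gsq p) := ig2.mono' cgp.aestronglyMeasurable
    (Filter.Eventually.of_forall fun x => by
      rw [Real.norm_of_nonneg (gsq_nonneg _ _), hg]; linarith [gsq_nonneg q x])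
  have igq : Integrable (gsq q) := ig2.mono' cgq.aestronglyMeasurable
    (Filter.Eventually.of_forall fun x => by
      rw [Real.norm_of_nonneg (gsq_nonneg _ _), hg]; linarith [gsq_nonneg p x])
  -- finiteness of the norms on the left-hand side
  have fin : ∀ φ : Ed d → ℝ, Integrable (fun x => φ x ^ 2) →
      ∫⁻ x, ENNReal.ofReal (φ x ^ 2) ≠ ⊤ := fun φ hφ => by
    rw [← ofReal_integral_eq_lintegral_ofReal hφ (Filter.Eventually.of_forall fun x => sq_nonneg _)]
    exact ENNReal.ofReal_ne_top
  have fG := nX2r_ne_top hρ (fin g ig2)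
  have fU := nX2r_ne_top hρ (fin n in2)
  have fS := nS_ne_top hρ (fin n in2)
  set G := (nX2r ρ (fun x => ENNReal.ofReal (g x ^ 2))).toReal with hGdef
  set U := (nX2r ρ (fun x => ENNReal.ofReal (n x ^ 2))).toReal with hUdef
  set S := (nS ρ (fun x => ENNReal.ofReal (n x ^ 2))).toReal with hSdef
  have eG : nX2r ρ (fun x => ENNReal.ofReal (g x ^ 2)) = ENNReal.ofReal G :=
    (ENNReal.ofReal_toReal fG).symm
  have eU : nX2r ρ (fun x => ENNReal.ofReal (n x ^ 2)) = ENNReal.ofReal U :=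
    (ENNReal.ofReal_toReal fU).symm
  have eS : nS ρ (fun x => ENNReal.ofReal (n x ^ 2)) = ENNReal.ofReal S :=
    (ENNReal.ofReal_toReal fS).symm
  have G0 : 0 ≤ G := ENNReal.toReal_nonneg
  have U0 : 0 ≤ U := ENNReal.toReal_nonneg
  have S0 : 0 ≤ S := ENNReal.toReal_nonneg
  have AG : Ann ρ (fun x => ENNReal.ofReal (g x ^ 2)) (ENNReal.ofReal (2 * G)) := by
    have := ann_nX2r hρ (fun x : Ed d => ENNReal.ofReal (g x ^ 2))
    rwa [eG, show (2 : ℝ≥0∞) = ENNReal.ofReal 2 by simp, ← ENNReal.ofReal_mul (by norm_num)] at this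
  have AU : Ann ρ (fun x => ENNReal.ofReal (n x ^ 2)) (ENNReal.ofReal (2 * U)) := by
    have := ann_nX2r hρ (fun x : Ed d => ENNReal.ofReal (n x ^ 2))
    rwa [eU, show (2 : ℝ≥0∞) = ENNReal.ofReal 2 by simp, ← ENNReal.ofReal_mul (by norm_num)] at this
  have AS : ∀ R, ρ ≤ R → Ann ρ (fun x => ENNReal.ofReal ((bet R x * n x) ^ 2))
      (ENNReal.ofReal (32 * S)) := fun R hR => by
    have := ann_nS hρ hR (fun x : Ed d => ENNReal.ofReal (n x ^ 2))
    rw [eS, show (32 : ℝ≥0∞) = ENNReal.ofReal 32 by simp,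
      ← ENNReal.ofReal_mul (by norm_num)] at this
    simpa only [mul_pow, ENNReal.ofReal_mul (sq_nonneg _)] using this
  -- the four terms on the right-hand side of the Morawetz inequality
  set K₀ := ∫ x, H x * n x with hK₀
  have bK : K₀ ≤ A * √(2 * U) + c / 2 * (1 * (2 * U) + 2 * U / 1) :=
    H_bound hρ ha hγ cF cn cn cH F0 n0 H0 hHF hA (by positivity) (by positivity) one_pos hFA AU AU
  have bG : ∫ x, H x * g x ≤ A * √(2 * G) + c / 2 * (√τ * (2 * U) + 2 * G / √τ) :=
    H_bound hρ ha hγ cF cn cg cH F0 g0 H0 hHF hA (by positivity) (by positivity) s0 hFA AU AG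
  have bS : ∀ R, ρ ≤ R → ∫ x, H x * (bet R x * n x)
      ≤ A * √(32 * S) + c / 2 * (√τ * (2 * U) + 32 * S / √τ) := fun R hR => by
    have hR0 := hρ.trans_le hR
    exact H_bound hρ ha hγ cF cn ((bet_contDiff (d := d) hR0 (n := 1)).continuous.mul cn) cH F0
      (fun x => mul_nonneg (bet_pos hR0 x).le (n0 x)) H0 hHF hA (by positivity) (by positivity) s0
      hFA AU (AS R hR)
  have bW : ∫ x, bw a γ x * n x ^ 2 ≤ c * (2 * U) :=
    weight_integral hρ ha hγ (by positivity) (cn.pow 2) (fun x => sq_nonneg _) AU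
  have Eim := energy_im hp hq cn cH n0 H0 hn hH in2 igp igq iH2
  have Ere := energy_re (L := τ + a) hp hq
    (fun x => by linarith [(abs_le.1 (hZb x)).1]) cn cH n0 H0 hn hg hH in2 igp igq iH2
  rw [← hK₀] at Eim Ere
  set N := ∫ x, n x ^ 2 with hN
  have N0 : 0 ≤ N := integral_nonneg fun x => sq_nonneg _
  -- the Young inequality with weight `t` and both energy identities, `t² = τ + a + |e|`
  have bE : |e| * ∫ x, n x * g x ≤ t * K₀ := by
    have h1 : ∫ x, n x * g x ≤ ∫ x, (t / 2 * n x ^ 2 + 1 / (2 * t) * g x ^ 2) := by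
      refine integral_mono (integrable_mul_of_sq cn cg in2 ig2)
        ((in2.const_mul _).add (ig2.const_mul _)) fun x => ?_
      have : t / 2 * n x ^ 2 + 1 / (2 * t) * g x ^ 2 - n x * g x
          = (t * n x - g x) ^ 2 / (2 * t) := by
        field_simp; ring
      have h4 : 0 ≤ (t * n x - g x) ^ 2 / (2 * t) := by positivity
      simp only
      linarith
    rw [integral_add (in2.const_mul _) (ig2.const_mul _), integral_const_mul,
      integral_const_mul] at h1
    have h2 : |e| * ∫ x, g x ^ 2 ≤ t ^ 2 * K₀ := by
      calc |e| * ∫ x, g x ^ 2 ≤ |e| * ((τ + a) * N + K₀) := by gcongr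
        _ = (τ + a) * (|e| * N) + |e| * K₀ := by ring
        _ ≤ (τ + a) * K₀ + |e| * K₀ := by gcongr
        _ = _ := by rw [ht2]; ring
    calc |e| * ∫ x, n x * g x ≤ |e| * (t / 2 * N + 1 / (2 * t) * ∫ x, g x ^ 2) := by gcongr
      _ = t / 2 * (|e| * N) + 1 / (2 * t) * (|e| * ∫ x, g x ^ 2) := by ring
      _ ≤ t / 2 * K₀ + 1 / (2 * t) * (t ^ 2 * K₀) := by gcongr
      _ = _ := by field_simp; ring
  set T := 1/2 * (c * (2 * U)) + (A * √(2 * G) + c / 2 * (√τ * (2 * U) + 2 * G / √τ))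
      + κ * (A * √(32 * S) + c / 2 * (√τ * (2 * U) + 32 * S / √τ)) + t * K₀ with hT
  have hz : ∀ x, τ / 2 ≤ - Z x := fun x => by linarith [(abs_le.1 (hZb x)).2]
  let W : ℝ → Ed d → ℝ := fun R x => 1/2 * R ^ 2 * bet R x ^ 3 * (g x ^ 2 + (- Z x) * n x ^ 2)
      + κ / 2 * (d * R ^ 2 + (d - 3) * ‖x‖ ^ 2) * bet R x ^ 5 * n x ^ 2
  have W0 : ∀ R, 0 < R → ∀ x, 0 ≤ W R x := fun R hR x => by
    have := bet_pos hR x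
    have h1 : 0 ≤ - Z x := by linarith [hz x]
    have h2 : (0:ℝ) ≤ d - 3 := by linarith
    simp only [W]
    positivity
  have mor : ∀ R, ρ ≤ R → Integrable (W R) ∧ ∫ x, W R x ≤ T := fun R hR => by
    obtain ⟨h1, h2⟩ := morawetz (Zb := a + τ) (Kb := a) (e := e) hd (hρ.trans_le hR) hκ hp hq hZ
      (fun x => by
        have := abs_le.1 (hZb x)
        exact abs_le.2 ⟨by linarith, by linarith⟩)
      (bw_continuous a γ) (bw_nonneg ha) (bw_le ha hγ) hZe cn cg cH n0 g0 H0 hn hg hH in2 ig2 iH2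
    refine ⟨h1, h2.trans ?_⟩
    have h3 := mul_le_mul_of_nonneg_left (bS R hR) (zero_le_one.trans hκ1)
    linarith
  have T0 : 0 ≤ T := (integral_nonneg (W0 ρ hρ)).trans (mor ρ le_rfl).2
  have ins : ∀ R, ρ ≤ R → ∀ x ∈ ball (0 : Ed d) R, g x ^ 2 ≤ 6 * R * W R x ∧
      τ * n x ^ 2 ≤ 12 * R * W R x ∧ n x ^ 2 ≤ 4 * R ^ 3 * W R x := fun R hR x hx => by
    have hR0 := hρ.trans_le hR
    rw [mem_ball_zero_iff] at hx
    exact W_inside hR0 (by gcongr) (bet_pos hR0 x) (bet_sq hR0 x) τ0.le (hz x) hκ1 hd'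
      (sq_nonneg _) (sq_nonneg _)
  have LG : nX2r ρ (fun x => ENNReal.ofReal (g x ^ 2)) ≤ ENNReal.ofReal (6 * T) :=
    nX2r_le hρ fun R hR => by
      have hR0 := hρ.trans_le hR
      refine (extract (k := 6 * R) measurableSet_ball (by positivity) (mor R hR).1 (W0 R hR0)
        (mor R hR).2 fun x hx => (ins R hR x hx).1).trans (le_of_eq (by ring_nf))
  have LU : nX2r ρ (fun x => ENNReal.ofReal (n x ^ 2)) ≤ ENNReal.ofReal (12 * T / τ) :=
    nX2r_le hρ fun R hR => by
      have hR0 := hρ.trans_le hR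
      refine (extract (k := 12 * R / τ) measurableSet_ball (by positivity) (mor R hR).1 (W0 R hR0)
        (mor R hR).2 fun x hx => ?_).trans (le_of_eq (by ring_nf))
      have := (ins R hR x hx).2.1
      rw [div_mul_eq_mul_div, le_div_iff₀ τ0]
      linarith
  have LS : nS ρ (fun x => ENNReal.ofReal (n x ^ 2)) ≤ ENNReal.ofReal (4 * T) :=
    nS_le hρ fun R hR => by
      have hR0 := hρ.trans_le hR
      refine (extract (k := 4 * R ^ 3) measurableSet_ball (by positivity) (mor R hR).1 (W0 R hR0)
        (mor R hR).2 fun x hx => (ins R hR x hx).2.2).trans (le_of_eq (by ring_nf))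
  have hG : G ≤ 6 * T := ENNReal.toReal_le_of_le_ofReal (by positivity) LG
  have hS : S ≤ 4 * T := ENNReal.toReal_le_of_le_ofReal (by positivity) LS
  have hU : τ * U ≤ 12 * T := by
    have := ENNReal.toReal_le_of_le_ofReal (by positivity) LU
    rw [le_div_iff₀ τ0] at this
    linarith
  -- radii with `R² |e| ≤ 1` use the cubic norm, the others the energy identity
  have K0 : 0 ≤ K₀ := integral_nonneg fun x => mul_nonneg (H0 x) (n0 x)
  have hE : |e| * U ≤ S + √|e| * K₀ := by
    have : nX2r ρ (fun x => ENNReal.ofReal (n x ^ 2))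
        ≤ ENNReal.ofReal ((S + √|e| * K₀) / |e|) := nX2r_le hρ fun R hR => by
      have hR0 := hρ.trans_le hR
      rcases le_total (R ^ 2 * |e|) 1 with h | h
      · refine (ball_le_nS hρ hR _).trans ?_
        rw [eS, ← ENNReal.ofReal_mul (by positivity)]
        apply ENNReal.ofReal_le_ofReal
        rw [mul_div_assoc', le_div_iff₀ e0]
        have h1 : R ^ 2 * |e| * (R * S) ≤ 1 * (R * S) := by gcongr
        have h2 : 0 ≤ R * (√|e| * K₀) := by positivity
        linarith
      · refine (setLIntegral_le_lintegral _ _).trans ?_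
        rw [← ofReal_integral_eq_lintegral_ofReal in2
          (Filter.Eventually.of_forall fun x => sq_nonneg _)]
        apply ENNReal.ofReal_le_ofReal
        rw [mul_div_assoc', le_div_iff₀ e0]
        have h1 : 1 ≤ R * √|e| := by
          apply le_of_sq_le_sq _ (by positivity)
          rw [mul_pow, Real.sq_sqrt e0.le]; linarith
        have h2 : 1 * K₀ ≤ R * √|e| * K₀ := by gcongr
        have h3 : 0 ≤ R * S := by positivity
        linarith
    have := ENNReal.toReal_le_of_le_ofReal (by positivity) this
    rw [le_div_iff₀ e0] at this
    linarith
  refine ⟨T, T0, final_algebra G0 U0 S0 hA c0 (zero_le_one.trans hκ1) hτ ha.le (by linarith) e0.le s0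
    (Real.sq_sqrt τ0.le) t0 ht2 bK le_rfl hG hU hS hE hM hMc, LG, ?_, LS, ?_⟩
  · rw [eU, ← ENNReal.ofReal_mul τ0.le]
    exact ENNReal.ofReal_le_ofReal hU
  · exact extract (measurableSet_lt measurable_const measurable_norm) (by norm_num)
      (mor ρ le_rfl).1 (W0 ρ hρ) (mor ρ le_rfl).2 fun x hx =>
        W_outside hρ hx (bet_pos hρ x) (bet_sq hρ x) (by linarith [hz x]) hκ1 hd'
          (sq_nonneg _) (sq_nonneg _)
end

/-! ### Passage to complex solutions -/

section
variable {d : ℕ} {u : Ed d → ℂ}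

lemma dR_re {x : Ed d} (hu : DifferentiableAt ℝ u x) (i : Fin d) :
    dR (fun x => (u x).re) i x = (pd u i x).re := by
  have := (Complex.reCLM.hasFDerivAt (x := u x)).comp x hu.hasFDerivAt
  have h2 : fderiv ℝ (fun x => (u x).re) x = Complex.reCLM.comp (fderiv ℝ u x) := this.fderiv
  simp [dR, pd, h2]

lemma dR_im {x : Ed d} (hu : DifferentiableAt ℝ u x) (i : Fin d) :
    dR (fun x => (u x).im) i x = (pd u i x).im := by
  have := (Complex.imCLM.hasFDerivAt (x := u x)).comp x hu.hasFDerivAt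
  have h2 : fderiv ℝ (fun x => (u x).im) x = Complex.imCLM.comp (fderiv ℝ u x) := this.fderiv
  simp [dR, pd, h2]

lemma pd_contDiff (hu : ContDiff ℝ 2 u) (i : Fin d) : ContDiff ℝ 1 (pd u i) := by
  have : ContDiff ℝ 1 (fderiv ℝ u) := hu.fderiv_right (by norm_num)
  exact this.clm_apply contDiff_const

lemma lapR_re (hu : ContDiff ℝ 2 u) (x : Ed d) : lapR (fun x => (u x).re) x = (lap u x).re := by
  unfold lapR lap
  rw [Complex.re_sum]
  refine Finset.sum_congr rfl fun i _ => ?_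
  have h : dR (fun x => (u x).re) i = fun x => (pd u i x).re :=
    funext fun y => dR_re (hu.differentiable (by norm_num) y) i
  rw [h, dR_re ((pd_contDiff hu i).differentiable (by norm_num) x)]
  rfl

lemma lapR_im (hu : ContDiff ℝ 2 u) (x : Ed d) : lapR (fun x => (u x).im) x = (lap u x).im := by
  unfold lapR lap
  rw [Complex.im_sum]
  refine Finset.sum_congr rfl fun i _ => ?_
  have h : dR (fun x => (u x).im) i = fun x => (pd u i x).im :=
    funext fun y => dR_im (hu.differentiable (by norm_num) y) i
  rw [h, dR_im ((pd_contDiff hu i).differentiable (by norm_num) x)]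
  rfl

lemma norm_sq_re_im (z : ℂ) : ‖z‖ ^ 2 = z.re ^ 2 + z.im ^ 2 := by
  rw [Complex.sq_norm, Complex.normSq_apply]; ring

lemma gs_eq (hu : ContDiff ℝ 2 u) (x : Ed d) :
    gs u x = gsq (fun x => (u x).re) x + gsq (fun x => (u x).im) x := by
  unfold gs gsq
  rw [← Finset.sum_add_distrib]
  refine Finset.sum_congr rfl fun i _ => ?_
  rw [dR_re (hu.differentiable (by norm_num) x), dR_im (hu.differentiable (by norm_num) x),
    norm_sq_re_im]

lemma lap_continuous (hu : ContDiff ℝ 2 u) : Continuous (lap u) := by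
  unfold lap
  exact continuous_finsetSum _ fun i _ => pd_continuous (pd_contDiff hu i) i

lemma eul_eq (V : Ed d → ℝ) (τ : ℝ) (x : Ed d) :
    eul (fun x => V x - τ) x = ‖x‖ * radialDeriv V x := by
  have h1 : eul (fun x => V x - τ) x = fderiv ℝ V x x := by
    unfold eul dR
    simp only [fderiv_sub_const]
    generalize fderiv ℝ V x = L
    conv_rhs => rw [← (EuclideanSpace.basisFun (Fin d) ℝ).sum_repr x]
    simp
  rw [h1, radialDeriv]
  rcases eq_or_ne x 0 with rfl | h
  · simp
  · have := norm_ne_zero_iff.2 h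
    field_simp

lemma integrable_of_lintegral_lt_top {φ : Ed d → ℝ} (cφ : Continuous φ) (φ0 : ∀ x, 0 ≤ φ x)
    (h : ∫⁻ x, ENNReal.ofReal (φ x) < ⊤) : Integrable φ :=
  ⟨cφ.aestronglyMeasurable, by
    rw [hasFiniteIntegral_iff_ofReal (Filter.Eventually.of_forall φ0)]; exact h⟩

lemma nXstarr_mono {ρ : ℝ} {g₁ g₂ : Ed d → ℝ≥0∞} (h : ∀ x, g₁ x ≤ g₂ x) :
    nXstarr ρ g₁ ≤ nXstarr ρ g₂ := by
  unfold nXstarr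
  gcongr with j
  · exact h _
  · exact h _
end

/-- The threshold is a polynomial in `τ₀`, so its product with `τ₀` vanishes at `0`. -/
lemma tendsto_threshold (a γ M : ℝ) :
    Filter.Tendsto (fun τ₀ => τ₀ * (1 + 2 * a + (2 * M * cw a γ τ₀) ^ 2))
      (nhdsWithin 0 (Set.Ioi 0)) (nhds 0) := by
  have hc : Continuous fun τ₀ : ℝ => τ₀ * (1 + 2 * a + (2 * M * cw a γ τ₀) ^ 2) := by
    unfold cw; fun_prop
  simpa using (hc.tendsto 0).mono_left nhdsWithin_le_nhds

/-- The sphere averages are controlled by the cubic norm of `u` and the norm of its gradient. -/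
lemma sphere_term {d : ℕ} {u : Ed d → ℂ} (hu : ContDiff ℝ 1 u) {Cs ρ T : ℝ} (hCs : 0 ≤ Cs)
    (hρ : 0 < ρ) (T0 : 0 ≤ T)
    (tr : ∀ R : ℝ, 0 < R → ENNReal.ofReal R * sphInt R (usq u) ≤ ENNReal.ofReal Cs *
      ∫⁻ x in ball (0 : Ed d) R,
        (ENNReal.ofReal (d + 1) * usq u x + ENNReal.ofReal (R ^ 2) * gradSq u x))
    (hG : nX2r ρ (gradSq u) ≤ ENNReal.ofReal (6 * T)) (hS : nS ρ (usq u) ≤ ENNReal.ofReal (4 * T)) :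
    (⨆ (R : ℝ) (_ : ρ ≤ R), (ENNReal.ofReal (R^2))⁻¹ * sphInt R (usq u))
      ≤ ENNReal.ofReal (Cs * (4 * (d + 1) + 6) * T) := by
  refine iSup₂_le fun R hR => ?_
  have hR0 := hρ.trans_le hR
  rw [mul_comm, ← div_eq_mul_inv]
  refine ENNReal.div_le_of_le_mul' ?_
  rw [← ENNReal.mul_le_mul_iff_right (a := ENNReal.ofReal R) (by simpa using hR0)
    ENNReal.ofReal_ne_top]
  refine (tr R hR0).trans ?_
  have mu : Measurable (usq u) := by
    have : usq u = fun x => ENNReal.ofReal (‖u x‖ ^ 2) := funext (usq_eq u)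
    rw [this]
    exact (hu.continuous.norm.pow 2).measurable.ennreal_ofReal
  have mg : Measurable (gradSq u) := by
    have : gradSq u = fun x => ENNReal.ofReal (gs u x) := funext (gradSq_eq u)
    rw [this]
    exact (gs_continuous hu).measurable.ennreal_ofReal
  rw [lintegral_add_left (mu.const_mul _), lintegral_const_mul _ mu, lintegral_const_mul _ mg]
  have h1 := (ball_le_nS hρ hR (usq u)).trans (mul_le_mul_right hS _)
  have h2 := (ball_le_nX2r hρ hR (gradSq u)).trans (mul_le_mul_right hG _)
  calc _ ≤ ENNReal.ofReal Cs * (ENNReal.ofReal (d + 1) *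
        (ENNReal.ofReal (R ^ 3) * ENNReal.ofReal (4 * T)) + ENNReal.ofReal (R ^ 2) *
        (ENNReal.ofReal R * ENNReal.ofReal (6 * T))) := by gcongr
    _ = _ := by
      have hd0 : (0:ℝ) ≤ (d:ℝ) + 1 := by positivity
      simp only [← ENNReal.ofReal_mul hR0.le, ← ENNReal.ofReal_mul hd0,
        ← ENNReal.ofReal_mul (sq_nonneg R), ← ENNReal.ofReal_mul (pow_nonneg hR0.le 3)]
      rw [← ENNReal.ofReal_add (by positivity) (by positivity), ← ENNReal.ofReal_mul hCs]
      congr 1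
      ring

/-- resolvent estimate for long range potentials without smallness
assumptions, d ≥ 3, for `τ ≥ B(τ₀)` with `τ₀ B(τ₀) = o(1)` as `τ₀ → 0`. -/
theorem stmt_7 (d : ℕ) (hd : 3 ≤ d) (a γ : ℝ) (ha : 0 < a) (hγ : 0 < γ) :
    ∃ B : ℝ → ℝ, (∀ τ₀ > (0:ℝ), 0 < B τ₀) ∧
      Filter.Tendsto (fun τ₀ => τ₀ * B τ₀) (nhdsWithin 0 (Set.Ioi 0)) (nhds 0) ∧
      ∃ C : ℝ, 0 < C ∧
      ∀ (V₁ V₂ : Ed d → ℝ), ContDiff ℝ 1 V₁ →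
      (∀ x : Ed d, |V₁ x| ≤ a * (1 + ‖x‖) ^ (-γ)) →
      (∀ x : Ed d, |V₂ x| ≤ a * (1 + ‖x‖) ^ (-γ - 1)) →
      (∀ x : Ed d, radialDeriv V₁ x ≤ a * (1 + ‖x‖) ^ (-γ - 1)) →
      ∀ (τ₀ : ℝ), 0 < τ₀ →
      ∀ (ε τ : ℝ), ε ≠ 0 → B τ₀ ≤ τ →
      ∀ (σ : ℝ), σ = 1 ∨ σ = -1 →
      ∀ (u f : Ed d → ℂ), ContDiff ℝ 2 u →
      (∫⁻ x, usq u x) < ⊤ → (∫⁻ x, gradSq u x) < ⊤ → (∫⁻ x, usq f x) < ⊤ →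
      (∀ x, -lap u x + ((V₁ x : ℂ) + (V₂ x : ℂ)) * u x
        + (σ : ℂ) * ((ε : ℂ) * Complex.I) * u x - (τ : ℂ) * u x = f x) →
      nX2r τ₀ (gradSq u)
        + ENNReal.ofReal τ * nX2r τ₀ (usq u)
        + ENNReal.ofReal ((d:ℝ) - 3) *
            (∫⁻ x in {x : Ed d | τ₀ < ‖x‖}, usq u x / ENNReal.ofReal (‖x‖^3))
        + (⨆ (R : ℝ) (_ : τ₀ ≤ R), (ENNReal.ofReal (R^2))⁻¹ * sphInt R (usq u))
      ≤ ENNReal.ofReal C * (nXstarr τ₀ (usq f)) ^ 2 := by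
  obtain ⟨Cs, hCs, trace⟩ := sphere_trace (d := d) (by omega)
  have hd' : (3:ℝ) ≤ d := by exact_mod_cast hd
  obtain ⟨κ, hκ⟩ : ∃ κ : ℝ, κ = ((d:ℝ) - 1) / 2 := ⟨_, rfl⟩
  have κ0 : 0 ≤ κ := by rw [hκ]; linarith
  obtain ⟨M, hM⟩ : ∃ M : ℝ, M = 27 * (6 + 17 * κ) := ⟨_, rfl⟩
  have M0 : 0 < M := by rw [hM]; positivity
  obtain ⟨Q, hQ⟩ : ∃ Q : ℝ, Q = 30 + Cs * (4 * (d + 1) + 6) := ⟨_, rfl⟩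
  have Q0 : 0 < Q := by rw [hQ]; positivity
  refine ⟨fun τ₀ => 1 + 2 * a + (2 * M * cw a γ τ₀) ^ 2, fun τ₀ _ => by positivity,
    tendsto_threshold a γ M, Q * (4 * M ^ 2), by positivity, ?_⟩
  intro V₁ V₂ hV hV1 hV2 hVr ρ hρ ε τ hε hτ σ hσ u f hu hu2 hgu2 hf2 heq
  simp only at hτ
  have hτ1 : 1 ≤ τ := by nlinarith [sq_nonneg (2 * M * cw a γ ρ)]
  have hτa : 2 * a ≤ τ := by nlinarith [sq_nonneg (2 * M * cw a γ ρ)]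
  have hMc : 2 * M * cw a γ ρ ≤ √τ := by
    apply Real.le_sqrt_of_sq_le
    linarith
  have hu1 : ContDiff ℝ 1 u := hu.of_le (by norm_num)
  by_cases hAt : nXstarr ρ (usq f) = ⊤
  · rw [hAt, ENNReal.top_pow two_ne_zero, ENNReal.mul_top (by simp; positivity)]
    exact le_top
  set A := (nXstarr ρ (usq f)).toReal with hA
  have A0 : 0 ≤ A := ENNReal.toReal_nonneg
  have eA : nXstarr ρ (usq f) = ENNReal.ofReal A := (ENNReal.ofReal_toReal hAt).symm
  -- the equation with the short range potential moved to the right-hand side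
  let h : Ed d → ℂ := fun x => -lap u x + (V₁ x : ℂ) * u x
    + (σ : ℂ) * ((ε : ℂ) * Complex.I) * u x - (τ : ℂ) * u x
  have ch : Continuous h := by
    have := lap_continuous hu
    have := hu.continuous
    have := hV.continuous
    simp only [h]
    fun_prop
  have cb := bw_continuous (d := d) a γ
  have hhf : ∀ x, ‖h x‖ ≤ ‖f x‖ + bw a γ x * ‖u x‖ := fun x => by
    have e1 : h x = f x - (V₂ x : ℂ) * u x := by rw [← heq x]; simp only [h]; ring
    rw [e1]
    refine (norm_sub_le _ _).trans ?_
    rw [norm_mul, Complex.norm_real, Real.norm_eq_abs]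
    gcongr
    exact hV2 x
  -- `F` is a continuous function below `|f|` with `|h| ≤ F + b|u|`; `f` itself may fail to be
  -- continuous or measurable, as `V₂` is arbitrary
  let F : Ed d → ℝ := fun x => max (‖h x‖ - bw a γ x * ‖u x‖) 0
  have cF : Continuous F := (ch.norm.sub (cb.mul hu.continuous.norm)).max continuous_const
  have F0 : ∀ x, 0 ≤ F x := fun x => le_max_right _ _
  have hFf : ∀ x, F x ≤ ‖f x‖ := fun x =>
    max_le (by linarith [hhf x]) (norm_nonneg _)
  have hHF : ∀ x, ‖h x‖ ≤ F x + bw a γ x * ‖u x‖ := fun x => by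
    have := le_max_left (‖h x‖ - bw a γ x * ‖u x‖) 0
    simp only [F]; linarith
  have hFf2 : ∀ x, ENNReal.ofReal (F x) ^ 2 ≤ usq f x := fun x => by
    rw [usq_eq, ENNReal.ofReal_pow (norm_nonneg _)]
    gcongr
    exact hFf x
  have in2 : Integrable fun x => ‖u x‖ ^ 2 :=
    integrable_of_lintegral_lt_top (hu.continuous.norm.pow 2) (fun x => sq_nonneg _)
      (by simpa only [usq_eq] using hu2)
  have igs : Integrable (gs u) :=
    integrable_of_lintegral_lt_top (gs_continuous hu1) (gs_nonneg u)
      (by simpa only [gradSq_eq] using hgu2)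
  have iF2 : Integrable fun x => F x ^ 2 := by
    refine integrable_of_lintegral_lt_top (cF.pow 2) (fun x => sq_nonneg _)
      (lt_of_le_of_lt (lintegral_mono fun x => ?_) hf2)
    rw [ENNReal.ofReal_pow (F0 x)]
    exact hFf2 x
  have iH2 : Integrable fun x => ‖h x‖ ^ 2 := by
    refine ((iF2.const_mul 2).add (in2.const_mul (2 * a ^ 2))).mono'
      (ch.norm.pow 2).aestronglyMeasurable (Filter.Eventually.of_forall fun x => ?_)
    rw [Real.norm_of_nonneg (sq_nonneg _)]
    have h1 : ‖h x‖ ≤ F x + a * ‖u x‖ := (hHF x).trans (by gcongr; exact bw_le ha hγ x)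
    have h2 : ‖h x‖ ^ 2 ≤ (F x + a * ‖u x‖) ^ 2 := by gcongr
    simp only [Pi.add_apply]
    nlinarith [sq_nonneg (F x - a * ‖u x‖)]
  have hg2 : ∀ x, √(gs u x) ^ 2 = gs u x := fun x => Real.sq_sqrt (gs_nonneg u x)
  have hσε : σ * ε ≠ 0 := by
    rcases hσ with rfl | rfl <;> simpa using hε
  obtain ⟨T, T0, hT, LG, LU, LS, LD⟩ := core (e := σ * ε) (A := A) (Z := fun x => V₁ x - τ)
    (p := fun x => (u x).re) (q := fun x => (u x).im) (n := fun x => ‖u x‖)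
    (g := fun x => √(gs u x)) (H := fun x => ‖h x‖) (F := F)
    hd hκ hρ ha hγ hτ1 hτa hσε A0 hM hMc
    (Complex.reCLM.contDiff.comp hu) (Complex.imCLM.contDiff.comp hu) (hV.sub contDiff_const)
    (fun x => by
      rw [sub_add_cancel]
      refine (hV1 x).trans (mul_le_of_le_one_right ha.le ?_)
      exact Real.rpow_le_one_of_one_le_of_nonpos (by simp) (by linarith))
    (fun x => by
      rw [eul_eq]
      exact mul_le_mul_of_nonneg_left (hVr x) (norm_nonneg x))
    hu.continuous.norm (gs_continuous hu1).sqrt ch.norm cF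
    (fun x => norm_nonneg _) (fun x => Real.sqrt_nonneg _) (fun x => norm_nonneg _) F0
    (fun x => norm_sq_re_im _) (fun x => by rw [hg2, gs_eq hu])
    (fun x => by
      rw [lapR_re hu, lapR_im hu, norm_sq_re_im]
      simp only [h]
      simp
      ring)
    in2 (by simpa only [hg2] using igs) iH2 hHF ((nXstarr_mono hFf2).trans eA.le)
  simp only [hg2, ← gradSq_eq] at LG
  simp only [← usq_eq] at LU LS
  have LSph := sphere_term hu1 hCs hρ T0 (trace u hu1) LG LS
  have LD' : ENNReal.ofReal ((d:ℝ) - 3) *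
      (∫⁻ x in {x : Ed d | ρ < ‖x‖}, usq u x / ENNReal.ofReal (‖x‖^3)) ≤ ENNReal.ofReal (12 * T) := by
    rw [← lintegral_const_mul' _ _ ENNReal.ofReal_ne_top]
    refine (le_of_eq ?_).trans LD
    refine setLIntegral_congr_fun (measurableSet_lt measurable_const measurable_norm) fun x hx => ?_
    have hx0 : 0 < ‖x‖ := hρ.trans hx
    rw [usq_eq, ← ENNReal.ofReal_div_of_pos (by positivity), ← ENNReal.ofReal_mul (by linarith),
      mul_div_assoc]
  rw [eA, ← ENNReal.ofReal_pow A0, ← ENNReal.ofReal_mul (by positivity)]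
  calc _ ≤ ENNReal.ofReal (6 * T) + ENNReal.ofReal (12 * T) + ENNReal.ofReal (12 * T)
        + ENNReal.ofReal (Cs * (4 * (d + 1) + 6) * T) := by gcongr
    _ = ENNReal.ofReal (Q * T) := by
      rw [← ENNReal.ofReal_add (by positivity) (by positivity),
        ← ENNReal.ofReal_add (by positivity) (by positivity),
        ← ENNReal.ofReal_add (by positivity) (by positivity), hQ]
      congr 1
      ring
    _ ≤ _ := by
      apply ENNReal.ofReal_le_ofReal
      calc Q * T ≤ Q * (4 * M ^ 2 * A ^ 2) := by gcongr
        _ = _ := by ring
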